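/- arXiv:1306.1368 — 9 statements merged into one kernel-verified Lean document; each statement's English description precedes it below -/
import Mathlib

section
/- Let p be a prime, V a d-dimensional vector space over 𝔽_p, h a linear automorphism of V, v ∈ V, and let g be the affine transformation g = t_v h. Then the order of g equals either orderOf h or p · orderOf h. -/
/-! The linear part is a homomorphism from the affine group to the general linear group whose kernel
consists of the translations, each of which has order dividing `p` because `p` annihilates `V`.
Hence `orderOf h ∣ orderOf g ∣ p * orderOf h`, and as `p` is prime nothing lies strictly between. -/

theorem eq_or_eq_prime_mul_of_dvd {p m n : ℕ} (hp : p.Prime) (hnm : n ∣ m) (hmn : m ∣ p * n) :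
    m = n ∨ m = p * n := by
  obtain ⟨c, rfl⟩ := hnm
  rcases n.eq_zero_or_pos with rfl | hn
  · simp
  have hc : c ∣ p := Nat.dvd_of_mul_dvd_mul_left hn (by rwa [mul_comm n p])
  rcases (Nat.dvd_prime hp).1 hc with rfl | rfl
  · exact .inl (mul_one n)
  · exact .inr (mul_comm n c)

section OrderOfMap

variable {G H : Type*} [Monoid G] [Monoid H] {f : G →* H}

theorem orderOf_dvd_mul_orderOf_map {n : ℕ} (hf : ∀ x, f x = 1 → x ^ n = 1) (g : G) :
    orderOf g ∣ n * orderOf (f g) := by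
  rw [mul_comm, orderOf_dvd_iff_pow_eq_one, pow_mul]
  exact hf _ (by rw [map_pow, pow_orderOf_eq_one])

theorem orderOf_eq_map_or_eq_prime_mul {p : ℕ} (hp : p.Prime) (hf : ∀ x, f x = 1 → x ^ p = 1)
    (g : G) : orderOf g = orderOf (f g) ∨ orderOf g = p * orderOf (f g) :=
  eq_or_eq_prime_mul_of_dvd hp (orderOf_map_dvd f g) (orderOf_dvd_mul_orderOf_map hf g)

end OrderOfMap

section AffineSpace

variable {k V P : Type*} [Ring k] [AddCommGroup V] [Module k V] [AddTorsor V P]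

theorem exists_eq_constVAdd_of_linear_eq_one {e : P ≃ᵃ[k] P} (he : e.linear = 1) :
    ∃ v : V, e = AffineEquiv.constVAdd k P v := by
  obtain ⟨x₀⟩ : Nonempty P := inferInstance
  refine ⟨e x₀ -ᵥ x₀, AffineEquiv.ext fun x => ?_⟩
  calc
    e x = e ((x -ᵥ x₀) +ᵥ x₀) := by rw [vsub_vadd]
    _ = (x -ᵥ x₀) +ᵥ e x₀ := by rw [e.map_vadd, he, LinearEquiv.coe_one, id]
    _ = (e x₀ -ᵥ x₀) +ᵥ x := vsub_vadd_comm x x₀ (e x₀)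

theorem pow_eq_one_of_linear_eq_one {n : ℕ} (hV : ∀ v : V, n • v = 0) {e : P ≃ᵃ[k] P}
    (he : e.linear = 1) : e ^ n = 1 := by
  obtain ⟨v, rfl⟩ := exists_eq_constVAdd_of_linear_eq_one he
  rw [← AffineEquiv.constVAdd_nsmul, hV, AffineEquiv.constVAdd_zero, AffineEquiv.one_def]

theorem orderOf_affineEquiv_eq_or_eq_mul {p : ℕ} (hp : p.Prime) (hV : ∀ v : V, p • v = 0)
    (e : P ≃ᵃ[k] P) : orderOf e = orderOf e.linear ∨ orderOf e = p * orderOf e.linear :=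
  orderOf_eq_map_or_eq_prime_mul (f := AffineEquiv.linearHom) hp
    (fun _ => pow_eq_one_of_linear_eq_one hV) e

theorem orderOf_affineEquiv_toEquiv (e : P ≃ᵃ[k] P) :
    orderOf (e.toEquiv : Equiv.Perm P) = orderOf e :=
  orderOf_injective (MonoidHom.mk' AffineEquiv.toEquiv fun _ _ => rfl)
    AffineEquiv.toEquiv_injective e

end AffineSpace

theorem affine_order_eq_or_eq_mul_general {p : ℕ} (hp : p.Prime) {k V : Type*} [Ring k]
    [AddCommGroup V] [Module k V] (hV : ∀ x : V, p • x = 0) (h : V ≃ₗ[k] V) (v : V)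
    (g : Equiv.Perm V) (hg : ∀ x : V, g x = h (x + v)) :
    orderOf g = orderOf h ∨ orderOf g = p * orderOf h := by
  let e : V ≃ᵃ[k] V := (AffineEquiv.constVAdd k V v).trans h.toAffineEquiv
  have hge : g = e.toEquiv := Equiv.ext fun x => (hg x).trans (congrArg h (add_comm x v))
  rw [hge, orderOf_affineEquiv_toEquiv]
  exact orderOf_affineEquiv_eq_or_eq_mul hp hV e

/-- Let `p` be a prime, `V` a `d`-dimensional vector space over `𝔽_p`,
`h` a linear automorphism of `V`, `v ∈ V`, and `g = t_v h` the affine transformation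
`x ↦ h (x + v)`.  Then the order of `g` equals either `orderOf h` or `p * orderOf h`. -/
theorem affine_order_eq_or_eq_mul (p d : ℕ) [Fact p.Prime] (V : Type*) [AddCommGroup V]
    [Module (ZMod p) V] [Module.Finite (ZMod p) V]
    (hdim : Module.finrank (ZMod p) V = d)
    (h : V ≃ₗ[ZMod p] V) (v : V)
    (g : Equiv.Perm V) (hg : ∀ x : V, g x = h (x + v)) :
    orderOf g = orderOf h ∨ orderOf g = p * orderOf h :=
  affine_order_eq_or_eq_mul_general Fact.out (ZModModule.char_nsmul_eq_zero p) h v g hg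
end

section
/- Let p be a prime, V a d-dimensional vector space over 𝔽_p, h a linear automorphism of V of order k, and set h(k) = I + h + ⋯ + h^{k−1}. Then: (a) for every v ∈ V, h applied to h(k)(v) equals h(k)(v), i.e. h(k)(v) is a fixed vector of h; and (b) for every v ∈ V, the affine transformation g = t_v h satisfies g^k = t_{h(k)(v)}; consequently orderOf g = p·k if h(k)(v) ≠ 0, and orderOf g = k if h(k)(v) = 0. -/
/-!
Iterating `g = t_v h` gives `g ^ n = h ^ n` followed by the translation by `h (h(n) v)`, so
`g ^ n = 1` forces `h ^ n = 1`, and `k = orderOf h` divides `orderOf g`. At `n = k` the linear part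
is trivial, and `h (h(k) v) = h(k) v` because `(h - 1) * h(k) = h ^ k - 1 = 0`. Hence `g ^ k` is the
translation by `h(k) v`, whose order is the additive order of that vector.
-/

open Finset

theorem mul_geom_sum_eq_self_of_pow_eq_one {A : Type*} [Ring A] {a : A} {n : ℕ} (ha : a ^ n = 1) :
    a * ∑ i ∈ range n, a ^ i = ∑ i ∈ range n, a ^ i := by
  have hzero : (a - 1) * ∑ i ∈ range n, a ^ i = 0 := by rw [mul_geom_sum, ha, sub_self]
  rwa [sub_mul, one_mul, sub_eq_zero] at hzero

theorem orderOf_pow_mul_of_dvd {M : Type*} [Monoid M] {x : M} {n : ℕ} (hn : n ∣ orderOf x) :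
    orderOf (x ^ n) * n = orderOf x := by
  rcases eq_or_ne n 0 with rfl | hn0
  · rw [mul_zero, zero_dvd_iff.mp hn]
  · rw [orderOf_pow_of_dvd hn0 hn, Nat.div_mul_cancel hn]

theorem orderOf_addRight {A : Type*} [AddGroup A] (a : A) :
    orderOf (Equiv.addRight a) = addOrderOf a := by
  have addRight_eq_one_iff (b : A) : Equiv.addRight b = 1 ↔ b = 0 := by
    simp [Equiv.ext_iff]
  refine Nat.dvd_antisymm ?_ ?_
  · rw [orderOf_dvd_iff_pow_eq_one, Equiv.nsmul_addRight, addRight_eq_one_iff,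
      addOrderOf_nsmul_eq_zero]
  · rw [addOrderOf_dvd_iff_nsmul_eq_zero, ← addRight_eq_one_iff, ← Equiv.nsmul_addRight,
      pow_orderOf_eq_one]

section Endomorphism

variable {R M : Type*} [Semiring R] [AddCommMonoid M] [Module R M]

/-- The endomorphism `f(n) = 1 + f + ⋯ + f ^ (n - 1)`, with `f(0) = 0`. -/
def geomSum (f : Module.End R M) (n : ℕ) : Module.End R M :=
  ∑ i ∈ range n, f ^ i

theorem geomSum_succ (f : Module.End R M) (n : ℕ) : geomSum f (n + 1) = f * geomSum f n + 1 :=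
  geom_sum_succ

theorem iterate_map_add_right (f : Module.End R M) (v x : M) (n : ℕ) :
    (fun y ↦ f (y + v))^[n] x = (f ^ n) x + f (geomSum f n v) := by
  induction n with
  | zero => simp [geomSum]
  | succ n ih =>
    rw [Function.iterate_succ_apply', ih]
    simp only [geomSum_succ, pow_succ', Module.End.mul_apply, LinearMap.add_apply,
      Module.End.one_apply, map_add, add_assoc]

theorem toLinearMap_pow_orderOf (h : M ≃ₗ[R] M) :
    (h.toLinearMap : Module.End R M) ^ orderOf h = 1 := by
  rw [← LinearEquiv.automorphismGroup.toLinearMapMonoidHom_apply, ← map_pow, pow_orderOf_eq_one,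
    map_one]

end Endomorphism

section AffinePerm

variable {R V : Type*} [Semiring R] [AddCommGroup V] [Module R V]

/-- The affine transformation `t_v h`, in which the translation by `v` is performed before `h`. -/
def affinePerm (h : V ≃ₗ[R] V) (v : V) : Equiv.Perm V :=
  h.toEquiv * Equiv.addRight v

theorem map_geomSum_orderOf (h : V ≃ₗ[R] V) (w : V) :
    h (geomSum h.toLinearMap (orderOf h) w) = geomSum h.toLinearMap (orderOf h) w :=
  LinearMap.congr_fun (mul_geom_sum_eq_self_of_pow_eq_one (toLinearMap_pow_orderOf h)) w

theorem affinePerm_pow_apply (h : V ≃ₗ[R] V) (v : V) (n : ℕ) (x : V) :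
    (affinePerm h v ^ n) x = (h ^ n) x + h (geomSum h.toLinearMap n v) := by
  rw [LinearEquiv.pow_apply]
  exact (iterate_map_add_right h.toLinearMap v x n).trans
    (congrArg (· + _) (Module.End.pow_apply _ n x))

theorem orderOf_dvd_orderOf_affinePerm (h : V ≃ₗ[R] V) (v : V) :
    orderOf h ∣ orderOf (affinePerm h v) := by
  set n := orderOf (affinePerm h v) with hn
  have linear_add_const (x : V) : (h ^ n) x + h (geomSum h.toLinearMap n v) = x := by
    rw [← affinePerm_pow_apply, hn, pow_orderOf_eq_one, Equiv.Perm.one_apply]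
  have const_eq_zero : h (geomSum h.toLinearMap n v) = 0 := by
    simpa only [map_zero, zero_add] using linear_add_const 0
  refine orderOf_dvd_of_pow_eq_one (LinearEquiv.ext fun x ↦ ?_)
  simpa only [const_eq_zero, add_zero, LinearEquiv.coe_one, id_eq] using linear_add_const x

theorem affinePerm_pow_orderOf (h : V ≃ₗ[R] V) (v : V) :
    affinePerm h v ^ orderOf h = Equiv.addRight (geomSum h.toLinearMap (orderOf h) v) := by
  ext x
  rw [affinePerm_pow_apply, map_geomSum_orderOf, pow_orderOf_eq_one, LinearEquiv.coe_one,
    id_eq, Equiv.coe_addRight]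

theorem orderOf_affinePerm (h : V ≃ₗ[R] V) (v : V) :
    orderOf (affinePerm h v) =
      addOrderOf (geomSum h.toLinearMap (orderOf h) v) * orderOf h := by
  rw [← orderOf_pow_mul_of_dvd (orderOf_dvd_orderOf_affinePerm h v), affinePerm_pow_orderOf,
    orderOf_addRight]

/-- If `h` has infinite order, then `k = 0` and `hkmap = 0`, and the last conclusion says that `g`
has infinite order. -/
theorem affine_power_order_general (h : V ≃ₗ[R] V) (k : ℕ) (hk : orderOf h = k)
    (hkmap : Module.End R V)
    (hkdef : hkmap = ∑ i ∈ Finset.range k, (h.toLinearMap : Module.End R V) ^ i)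
    (v : V) (g : Equiv.Perm V) (hg : ∀ x : V, g x = h (x + v)) :
    (∀ w : V, h (hkmap w) = hkmap w) ∧
    (∀ x : V, (g ^ k) x = x + hkmap v) ∧
    orderOf g = addOrderOf (hkmap v) * k := by
  obtain rfl : g = affinePerm h v := Equiv.ext hg
  obtain rfl : hkmap = geomSum h.toLinearMap k := hkdef
  subst hk
  exact ⟨map_geomSum_orderOf h, Equiv.ext_iff.mp (affinePerm_pow_orderOf h v),
    orderOf_affinePerm h v⟩

end AffinePerm

/-- With `g = t_v h`, `k = orderOf h` and `hk = I + h + ⋯ + h^(k-1)`: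
(a) `h (hk w) = hk w` for all `w`; (b) `g ^ k = t_{hk v}`, hence `orderOf g = p * k`
if `hk v ≠ 0` and `orderOf g = k` if `hk v = 0`. -/
theorem affine_power_order (p d : ℕ) [Fact p.Prime] (V : Type*) [AddCommGroup V]
    [Module (ZMod p) V] [Module.Finite (ZMod p) V]
    (hdim : Module.finrank (ZMod p) V = d)
    (h : V ≃ₗ[ZMod p] V) (k : ℕ) (hk : orderOf h = k)
    (hkmap : Module.End (ZMod p) V)
    (hkdef : hkmap = ∑ i ∈ Finset.range k, (h.toLinearMap : Module.End (ZMod p) V) ^ i)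
    (v : V) (g : Equiv.Perm V) (hg : ∀ x : V, g x = h (x + v)) :
    (∀ w : V, h (hkmap w) = hkmap w) ∧
    (∀ x : V, (g ^ k) x = x + hkmap v) ∧
    (hkmap v ≠ 0 → orderOf g = p * k) ∧
    (hkmap v = 0 → orderOf g = k) := by
  obtain ⟨hfix, hpow, horder⟩ := affine_power_order_general h k hk hkmap hkdef v g hg
  exact ⟨hfix, hpow,
    fun hv ↦ by rw [horder, addOrderOf_eq_prime (ZModModule.char_nsmul_eq_zero p _) hv],
    fun hv ↦ by rw [horder, hv, addOrderOf_zero, one_mul]⟩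
end

section
/- Let p be a prime, V a d-dimensional vector space over 𝔽_p, h a linear automorphism of V of order k, and v ∈ V. If the affine transformation g = t_v h has order p·k, then there exist h-invariant subspaces U and W of V such that V = U ⊕ W (internal direct sum), dim U = (k)_p, and the minimal polynomial of the restriction of h to U is (X − 1)^{(k)_p}; that is, h acts on U as a single Jordan block J_{(k)_p} with eigenvalue 1. -/
open Polynomial

/-!
Put `N = 1 + h + ⋯ + h ^ (k - 1)`. Since `g ^ k` is the translation by `h (N v)`, it is nontrivial
exactly when `N v ≠ 0`. Write `k = q * m` with `q = (k)_p`, and let `c = 1 + X + ⋯ + X ^ (m - 1)`,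
which is coprime to `X - 1`. In characteristic `p` we have `X ^ k - 1 = c ^ q * (X - 1) ^ q`, so `h`
is annihilated by `c ^ q * (X - 1) ^ q`, whereas `c ^ q * (X - 1) ^ (q - 1)` takes the value
`N ≠ 0` at `h`. Hence `X - 1` divides the minimal polynomial of `h` exactly `q` times, and some
Jordan block with eigenvalue `1` has size `q`.

To split off the block spanned by a chain `u, n u, …, n ^ r u`, where `n = h - 1`, we use a linear
form `f` that kills the range of `n ^ (r + 1)` and every vector of the chain but the last:
`x ↦ ∑ i + j = r, f (n ^ j x) • n ^ i u` is then a projection onto the block commuting with `n`.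
-/

section DualChain

open Finset.HasAntidiagonal (antidiagonal)

variable {R M : Type*} [CommSemiring R] [AddCommMonoid M] [Module R M]

/-- The vectors `u, n u, …, n ^ r u` form a Jordan chain of `n` ending in `0`, and `f` is a linear
form dual to the last of them which vanishes on the range of `n ^ (r + 1)`; the forms `f ∘ n ^ j`
are then dual to the whole chain. -/
structure IsDualChain (n : Module.End R M) (u : M) (f : M →ₗ[R] R) (r : ℕ) : Prop where
  pow_succ_apply : (n ^ (r + 1)) u = 0
  apply_pow_succ : ∀ x, f ((n ^ (r + 1)) x) = 0
  apply_pow : ∀ i, f ((n ^ i) u) = if i = r then 1 else 0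

/-- The endomorphism `x ↦ ∑ i + j = r, f (n ^ j x) • n ^ i u`, which for a dual chain is the
`n`-equivariant projection onto the span of the chain. -/
def chainProjection (n : Module.End R M) (u : M) (f : M →ₗ[R] R) (r : ℕ) : Module.End R M :=
  ∑ ij ∈ antidiagonal r, (f ∘ₗ n ^ ij.2).smulRight ((n ^ ij.1) u)

theorem chainProjection_apply (n : Module.End R M) (u : M) (f : M →ₗ[R] R) (r : ℕ) (x : M) :
    chainProjection n u f r x =
      ∑ ij ∈ antidiagonal r, f ((n ^ ij.2) x) • (n ^ ij.1) u := by
  simp [chainProjection, LinearMap.sum_apply]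

namespace IsDualChain

variable {n : Module.End R M} {u : M} {f : M →ₗ[R] R} {r : ℕ}

theorem commute_chainProjection (hc : IsDualChain n u f r) :
    Commute (chainProjection n u f r) n := by
  ext x
  -- Both sides are the sum over `i + j = r + 1` with its vanishing extreme term left out.
  calc chainProjection n u f r (n x)
      = ∑ ij ∈ antidiagonal (r + 1), f ((n ^ ij.2) x) • (n ^ ij.1) u := by
        rw [Finset.Nat.sum_antidiagonal_succ', hc.pow_succ_apply, smul_zero, zero_add,
          chainProjection_apply]
        simp only [pow_succ, Module.End.mul_apply]
    _ = n (chainProjection n u f r x) := by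
        rw [Finset.Nat.sum_antidiagonal_succ, hc.apply_pow_succ, zero_smul, zero_add,
          chainProjection_apply]
        simp only [map_sum, map_smul, pow_succ', Module.End.mul_apply]

theorem chainProjection_apply_pow (hc : IsDualChain n u f r) (i : ℕ) :
    chainProjection n u f r ((n ^ i) u) = (n ^ i) u := by
  have fixes_generator : chainProjection n u f r u = u := by
    rw [chainProjection_apply, Finset.sum_eq_single (0, r)]
    · simp [hc.apply_pow]
    · rintro ⟨i, j⟩ hij hne
      have hj : j ≠ r := by
        rintro rfl
        simp_all
      simp [hc.apply_pow, hj]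
    · simp
  rw [← Module.End.mul_apply, (hc.commute_chainProjection.pow_right i).eq, Module.End.mul_apply,
    fixes_generator]

theorem isIdempotentElem_chainProjection (hc : IsDualChain n u f r) :
    IsIdempotentElem (chainProjection n u f r) := by
  ext x
  rw [Module.End.mul_apply, chainProjection_apply n u f r x]
  simp [hc.chainProjection_apply_pow]

theorem range_chainProjection (hc : IsDualChain n u f r) :
    LinearMap.range (chainProjection n u f r) =
      Submodule.span R (Set.range fun i : Fin (r + 1) ↦ (n ^ (i : ℕ)) u) := by
  apply le_antisymm
  · rintro _ ⟨x, rfl⟩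
    rw [chainProjection_apply]
    refine Submodule.sum_mem _ fun ij hij ↦ Submodule.smul_mem _ _ (Submodule.subset_span ?_)
    exact ⟨⟨ij.1, Finset.Nat.antidiagonal.fst_lt hij⟩, rfl⟩
  · rw [Submodule.span_le]
    rintro _ ⟨i, rfl⟩
    exact ⟨_, hc.chainProjection_apply_pow i⟩

theorem pow_succ_apply_of_mem_range (hc : IsDualChain n u f r) {x : M}
    (hx : x ∈ LinearMap.range (chainProjection n u f r)) : (n ^ (r + 1)) x = 0 := by
  obtain ⟨y, rfl⟩ := hx
  rw [← Module.End.mul_apply, ← (hc.commute_chainProjection.pow_right _).eq, Module.End.mul_apply,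
    chainProjection_apply]
  refine Finset.sum_eq_zero fun ij _ ↦ ?_
  rw [← Module.End.mul_apply, ← pow_add, add_comm, pow_add, Module.End.mul_apply,
    hc.apply_pow_succ, zero_smul]

end IsDualChain

end DualChain

theorem IsDualChain.linearIndependent {R M : Type*} [CommRing R] [AddCommGroup M] [Module R M]
    {n : Module.End R M} {u : M} {f : M →ₗ[R] R} {r : ℕ} (hc : IsDualChain n u f r) :
    LinearIndependent R fun i : Fin (r + 1) ↦ (n ^ (i : ℕ)) u := by
  refine Fintype.linearIndependent_iff.2 fun a ha j ↦ ?_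
  have dual (i : Fin (r + 1)) : f ((n ^ (r - j + i : ℕ)) u) = if i = j then 1 else 0 := by
    rw [hc.apply_pow]
    congr 1
    simp only [Fin.ext_iff, eq_iff_iff]
    omega
  simpa [← Module.End.mul_apply, ← pow_add, dual] using
    congrArg (fun x ↦ f ((n ^ (r - j : ℕ)) x)) ha

section JordanBlock

variable {K V : Type*} [Field K] [AddCommGroup V] [Module K V]

theorem exists_isDualChain {n : Module.End K V} {u : V} {r : ℕ} (hu : (n ^ (r + 1)) u = 0)
    (hr : (n ^ r) u ∉ LinearMap.range (n ^ (r + 1))) : ∃ f, IsDualChain n u f r := by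
  suffices dual_from : ∀ s ≤ r, ∃ f : V →ₗ[K] K, (∀ x, f ((n ^ (r + 1)) x) = 0) ∧
      ∀ i, s ≤ i → f ((n ^ i) u) = if i = r then 1 else 0 by
    obtain ⟨f, hf, hfu⟩ := dual_from 0 r.zero_le
    exact ⟨f, hu, hf, fun i ↦ hfu i i.zero_le⟩
  intro s hs
  induction hs using Nat.decreasingInduction with
  | self =>
    obtain ⟨f, hfu, hf⟩ := Submodule.exists_le_ker_of_notMem hr
    have hf (x : V) : f ((n ^ (r + 1)) x) = 0 := hf ⟨x, rfl⟩
    refine ⟨(f ((n ^ r) u))⁻¹ • f, by simp [hf], fun i hi ↦ ?_⟩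
    rcases hi.eq_or_lt with rfl | hi
    · simp [hfu]
    · simp [Module.End.pow_map_zero_of_le hi hu, hi.ne']
  | of_succ s hs ih =>
    obtain ⟨f, hf, hfu⟩ := ih
    have hshift (i : ℕ) : f ((n ^ (r - s)) ((n ^ i) u)) = f ((n ^ (r - s + i)) u) := by
      rw [pow_add, Module.End.mul_apply]
    refine ⟨f - f ((n ^ s) u) • f ∘ₗ n ^ (r - s), fun x ↦ ?_, fun i hi ↦ ?_⟩
    · have : f ((n ^ (r - s)) ((n ^ (r + 1)) x)) = 0 := by
        rw [← Module.End.mul_apply, ← pow_add, add_comm, pow_add, Module.End.mul_apply, hf]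
      simp [hf, this]
    · have : f ((n ^ (r - s + i)) u) = if i = s then 1 else 0 := by
        rw [hfu _ (by omega)]
        congr 1
        simp only [eq_iff_iff]
        omega
      rcases hi.eq_or_lt with rfl | hi
      · simp [hshift, this, hs.ne]
      · simp [hshift, this, hi.ne', hfu i hi]

/-- `T` has a Jordan block of size `q` with eigenvalue `μ` as a direct summand. The block is encoded
by its dimension and minimal polynomial, which determine it up to similarity. -/
def HasJordanBlock (T : Module.End K V) (μ : K) (q : ℕ) : Prop :=
  ∃ (U W : Submodule K V) (hU : ∀ x ∈ U, T x ∈ U), (∀ x ∈ W, T x ∈ W) ∧ IsCompl U W ∧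
    Module.finrank K U = q ∧ minpoly K (T.restrict hU) = (X - C μ) ^ q

theorem minpoly_eq_X_sub_C_pow {A : Type*} [Ring A] [Algebra K A] {x : A} {μ : K} {r : ℕ}
    (hzero : (x - algebraMap K A μ) ^ (r + 1) = 0) (hne : (x - algebraMap K A μ) ^ r ≠ 0) :
    minpoly K x = (X - C μ) ^ (r + 1) := by
  have aeval_pow (j : ℕ) : aeval x ((X - C μ) ^ j) = (x - algebraMap K A μ) ^ j := by simp
  have root : aeval x ((X - C μ) ^ (r + 1)) = 0 := by rw [aeval_pow, hzero]
  have monic (j : ℕ) : ((X - C μ) ^ j).Monic := (monic_X_sub_C μ).pow j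
  obtain ⟨j, hj, hassoc⟩ := (dvd_prime_pow (prime_X_sub_C μ) _).1 (minpoly.dvd K x root)
  have heq := eq_of_monic_of_associated (minpoly.monic ⟨_, monic _, root⟩) (monic j) hassoc
  have : ¬ j ≤ r := fun hjr ↦ hne <| pow_eq_zero_of_le hjr <| by
    rw [← aeval_pow, ← heq, minpoly.aeval]
  rw [heq, show j = r + 1 by omega]

theorem hasJordanBlock_of_pow_apply_notMem_range {T : Module.End K V} {μ : K} {u : V} {r : ℕ}
    (hu : ((T - algebraMap K _ μ) ^ (r + 1)) u = 0)
    (hr : ((T - algebraMap K _ μ) ^ r) u ∉ LinearMap.range ((T - algebraMap K _ μ) ^ (r + 1))) :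
    HasJordanBlock T μ (r + 1) := by
  obtain ⟨f, hc⟩ := exists_isDualChain hu hr
  set n := T - algebraMap K _ μ with hn
  set P := chainProjection n u f r
  have hPT : Commute P T := by
    simpa [hn] using hc.commute_chainProjection.add_right (Algebra.commute_algebraMap_right μ P)
  have hP : IsIdempotentElem P := hc.isIdempotentElem_chainProjection
  obtain ⟨hU, hW⟩ := (LinearMap.IsIdempotentElem.commute_iff hP).1 hPT
  rw [Module.End.mem_invtSubmodule_iff_forall_mem_of_mem] at hU hW
  refine ⟨_, _, hU, hW, LinearMap.IsIdempotentElem.isCompl hP, ?_, ?_⟩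
  · rw [hc.range_chainProjection, finrank_span_eq_card hc.linearIndependent, Fintype.card_fin]
  have restrict_pow (j : ℕ) (x : LinearMap.range P) :
      (((T.restrict hU - algebraMap K _ μ) ^ j) x : V) = (n ^ j) x := by
    induction j with
    | zero => simp
    | succ j ih => simp [pow_succ', ih, hn]
  apply minpoly_eq_X_sub_C_pow
  · ext x
    simpa [restrict_pow] using hc.pow_succ_apply_of_mem_range x.2
  · intro hzero
    have := restrict_pow r ⟨u, _, hc.chainProjection_apply_pow 0⟩
    exact hr ⟨0, by simpa [hzero] using this⟩

theorem hasJordanBlock_of_aeval {T : Module.End K V} {μ : K} {a : K[X]} {r : ℕ}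
    (ha : IsCoprime a (X - C μ)) (hzero : aeval T (a * (X - C μ) ^ (r + 1)) = 0)
    (hne : aeval T (a * (X - C μ) ^ r) ≠ 0) : HasJordanBlock T μ (r + 1) := by
  obtain ⟨v, hv⟩ : ∃ v, aeval T (a * (X - C μ) ^ r) v ≠ 0 := by
    simpa [LinearMap.ext_iff] using hne
  have aeval_mul_pow (j : ℕ) (x : V) : ((T - algebraMap K _ μ) ^ j) (aeval T a x) =
      aeval T (a * (X - C μ) ^ j) x := by
    rw [mul_comm]
    simp
  refine hasJordanBlock_of_pow_apply_notMem_range (u := aeval T a v) ?_ ?_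
  · rw [aeval_mul_pow, hzero, LinearMap.zero_apply]
  rw [aeval_mul_pow]
  rintro ⟨y, hy⟩
  refine hv (Submodule.disjoint_def.1 (disjoint_ker_aeval_of_isCoprime T ha) _ ?_ ?_)
  · rw [← hy, LinearMap.mem_ker]
    simpa using LinearMap.congr_fun hzero y
  · rw [LinearMap.mem_ker, ← Module.End.mul_apply, ← map_mul, mul_left_comm, ← pow_succ', hzero,
      LinearMap.zero_apply]

end JordanBlock

theorem X_pow_sub_one_eq_geom_sum_mul_pow_expChar {R : Type*} [CommRing R] (p : ℕ) [ExpChar R p]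
    (e m : ℕ) : (X ^ (p ^ e * m) - 1 : R[X]) =
      (∑ i ∈ Finset.range m, X ^ i) ^ p ^ e * (X - 1) ^ p ^ e := by
  rw [← mul_pow, geom_sum_mul, sub_pow_expChar_pow, one_pow, ← pow_mul, mul_comm]

theorem geom_sum_X_eq_geom_sum_mul_pow_expChar {R : Type*} [CommRing R] (p : ℕ) [ExpChar R p]
    (e m r : ℕ) (hr : p ^ e = r + 1) : (∑ i ∈ Finset.range (p ^ e * m), X ^ i : R[X]) =
      (∑ i ∈ Finset.range m, X ^ i) ^ p ^ e * (X - 1) ^ r := by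
  refine (monic_X_sub_C (1 : R)).isRegular.right ?_
  simp only [C_1, geom_sum_mul, X_pow_sub_one_eq_geom_sum_mul_pow_expChar p e m]
  rw [mul_assoc, ← pow_succ, hr]

theorem isCoprime_geom_sum_X_sub_one {K : Type*} [Field K] {m : ℕ} (hm : (m : K) ≠ 0) :
    IsCoprime (∑ i ∈ Finset.range m, X ^ i : K[X]) (X - 1) :=
  (geom_sum_mul (X : K[X]) m ▸ X_pow_sub_one_separable_iff.2 hm).isCoprime

theorem hasJordanBlock_one_of_geom_sum_ne_zero {K V : Type*} [Field K] [AddCommGroup V]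
    [Module K V] (p : ℕ) [Fact p.Prime] [CharP K p] {T : Module.End K V} {k : ℕ} (hk : k ≠ 0)
    (hT : T ^ k = 1) (hN : ∑ i ∈ Finset.range k, T ^ i ≠ 0) :
    HasJordanBlock T 1 (p ^ k.factorization p) := by
  set e := k.factorization p
  set m := k / p ^ e
  have hm : (m : K) ≠ 0 := by
    rw [Ne, CharP.cast_eq_zero_iff K p]
    exact Nat.not_dvd_ordCompl Fact.out hk
  have hkm : p ^ e * m = k := Nat.ordProj_mul_ordCompl_eq_self k p
  obtain ⟨r, hr⟩ := Nat.exists_eq_add_one.2 (Nat.pow_pos (n := e) (Fact.out : p.Prime).pos)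
  have hcoprime : IsCoprime ((∑ i ∈ Finset.range m, X ^ i : K[X]) ^ p ^ e) (X - C 1) := by
    simpa using (isCoprime_geom_sum_X_sub_one hm).pow_left
  rw [hr]
  apply hasJordanBlock_of_aeval hcoprime
  · rw [C_1, ← hr, ← X_pow_sub_one_eq_geom_sum_mul_pow_expChar, hkm]
    simp [hT]
  · rw [C_1, ← geom_sum_X_eq_geom_sum_mul_pow_expChar p e m r hr, hkm]
    simpa using hN

theorem perm_pow_apply_of_apply_eq_map_add {R M : Type*} [Semiring R] [AddCommMonoid M] [Module R M]
    {T : Module.End R M} {v : M} {g : Equiv.Perm M} (hg : ∀ x, g x = T (x + v)) (j : ℕ) (x : M) :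
    (g ^ j) x = (T ^ j) x + T ((∑ i ∈ Finset.range j, T ^ i) v) := by
  induction j with
  | zero => simp
  | succ j ih =>
    have geom_sum_succ_apply : (∑ i ∈ Finset.range (j + 1), T ^ i) v =
        T ((∑ i ∈ Finset.range j, T ^ i) v) + v := by
      rw [geom_sum_succ]
      simp
    rw [pow_succ', Equiv.Perm.mul_apply, ih, hg, geom_sum_succ_apply, add_assoc, map_add, pow_succ',
      Module.End.mul_apply]

theorem affine_order_jordan_block_general {K V : Type*} [Field K] [AddCommGroup V] [Module K V]
    (p : ℕ) [Fact p.Prime] [CharP K p] (h : V ≃ₗ[K] V) (k : ℕ) (hk : k ≠ 0) (hhk : h ^ k = 1)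
    (v : V) (g : Equiv.Perm V) (hg : ∀ x : V, g x = h (x + v)) (hgk : g ^ k ≠ 1) :
    HasJordanBlock h.toLinearMap 1 (p ^ k.factorization p) := by
  have hT : h.toLinearMap ^ k = 1 :=
    (map_pow LinearEquiv.automorphismGroup.toLinearMapMonoidHom h k).symm.trans
      (congrArg LinearEquiv.toLinearMap hhk)
  refine hasJordanBlock_one_of_geom_sum_ne_zero p hk hT fun hN ↦ hgk ?_
  ext x
  simp [perm_pow_apply_of_apply_eq_map_add (T := h.toLinearMap) hg, hT, hN]

/-- If `g = t_v h` has order `p * k` (where `k = orderOf h`), then `V`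
decomposes as an internal direct sum `U ⊕ W` of `h`-invariant subspaces with
`dim U = (k)_p` and the restriction of `h` to `U` having minimal polynomial
`(X - 1) ^ (k)_p`, i.e. `h` acts on `U` as a single Jordan block `J_{(k)_p}`
with eigenvalue `1`. -/
theorem affine_order_jordan_block (p d : ℕ) [Fact p.Prime] (V : Type*) [AddCommGroup V]
    [Module (ZMod p) V] [Module.Finite (ZMod p) V]
    (hdim : Module.finrank (ZMod p) V = d)
    (h : V ≃ₗ[ZMod p] V) (k : ℕ) (hk : orderOf h = k)
    (v : V) (g : Equiv.Perm V) (hg : ∀ x : V, g x = h (x + v))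
    (hord : orderOf g = p * k) :
    ∃ (U W : Submodule (ZMod p) V) (hU : ∀ x ∈ U, h x ∈ U),
      (∀ x ∈ W, h x ∈ W) ∧ IsCompl U W ∧
      Module.finrank (ZMod p) U = p ^ (k.factorization p) ∧
      minpoly (ZMod p) (h.toLinearMap.restrict hU) =
        (X - 1 : Polynomial (ZMod p)) ^ (p ^ (k.factorization p)) := by
  have : Finite V := Module.finite_of_finite (ZMod p)
  have : Finite (V ≃ₗ[ZMod p] V) := DFunLike.finite _
  have hk0 : k ≠ 0 := hk ▸ (orderOf_pos h).ne'
  have hgk : g ^ k ≠ 1 := pow_ne_one_of_lt_orderOf hk0 <|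
    hord ▸ lt_mul_of_one_lt_left hk0.pos (Fact.out : p.Prime).one_lt
  simpa [HasJordanBlock] using
    affine_order_jordan_block_general p h k hk0 (hk ▸ pow_orderOf_eq_one h) v g hg hgk
end

section
/- Let p be a prime, V a d-dimensional vector space over 𝔽_p, h a linear automorphism of V, v ∈ V, and g = t_v h. Let U be the kernel of (h − 1)^d. Then there exist w ∈ V and u ∈ U such that t_w^{−1} ∘ g ∘ t_w = t_u h, i.e. g(x + w) − w = h(x + u) for all x ∈ V. In particular, if h has no nonzero fixed vector (ker(h − 1) = 0), then g is conjugate, by a translation, to the permutation of V induced by h. -/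
/-!
Put `N = h - 1`. Conjugating `x ↦ h (x + v)` by the translation by `w` changes the translation
part `h v` to `h v + N w`. Taking `w = -h b` replaces `v` by `v - N b`, because `h` commutes with
`N`. So `v` only matters modulo `range N`, and `V = ker (N ^ d) + range N` because the descending
chain `range (N ^ i)` is stationary from `i = d` on, `d` bounding the length of `V`.
-/

theorem isFixedPt_iterate_of_height_le {α : Type*} [PartialOrder α] {F : α → α} (hF : Monotone F)
    {d : ℕ} {x : α} (hx : F x ≤ x) (hd : Order.height x ≤ d) :
    Function.IsFixedPt F (F^[d] x) := by
  induction d generalizing x with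
  | zero =>
    have hmin : IsMin x := Order.height_eq_zero.mp (nonpos_iff_eq_zero.mp hd)
    exact hmin.eq_of_le hx
  | succ d ih =>
    rcases hx.eq_or_lt with hfix | hlt
    · exact (Function.iterate_fixed hfix (d + 1)).symm ▸ hfix
    · have hheight : Order.height (F x) + 1 ≤ d + 1 := (Order.height_add_one_le hlt).trans hd
      exact ih (hF hx) (by simpa using hheight)

section Module

variable {R V : Type*} [Ring R] [AddCommGroup V] [Module R V] {d : ℕ}

theorem iterate_map_top_eq_range_pow (f : Module.End R V) (n : ℕ) :
    (Submodule.map f)^[n] ⊤ = LinearMap.range (f ^ n) := by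
  induction n with
  | zero => exact LinearMap.range_id.symm
  | succ n ih =>
    rw [Function.iterate_succ_apply', ih, pow_succ', Module.End.mul_eq_comp, LinearMap.range_comp]

theorem range_pow_succ_eq_of_length_le (hd : Module.length R V ≤ d) (f : Module.End R V) :
    LinearMap.range (f ^ (d + 1)) = LinearMap.range (f ^ d) := by
  rw [← iterate_map_top_eq_range_pow, ← iterate_map_top_eq_range_pow, Function.iterate_succ_apply']
  exact isFixedPt_iterate_of_height_le (fun _ _ ↦ Submodule.map_mono) le_top
    (Module.length_eq_height R V ▸ hd)

theorem ker_pow_sup_range_eq_top (f : Module.End R V)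
    (hf : LinearMap.range (f ^ (d + 1)) = LinearMap.range (f ^ d)) :
    LinearMap.ker (f ^ d) ⊔ LinearMap.range f = ⊤ := by
  refine eq_top_iff.mpr fun x _ ↦ ?_
  obtain ⟨y, hy⟩ : (f ^ d) x ∈ LinearMap.range (f ^ (d + 1)) := hf ▸ LinearMap.mem_range_self _ x
  have hker : x - f y ∈ LinearMap.ker (f ^ d) := by
    rw [LinearMap.mem_ker, map_sub, ← hy, pow_succ, Module.End.mul_apply, sub_self]
  exact Submodule.mem_sup.mpr ⟨x - f y, hker, f y, LinearMap.mem_range_self f y, sub_add_cancel _ _⟩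

theorem translate_conj_of_eq_add (h : Module.End R V) {u v b : V} (hv : u + (h - 1) b = v) (x : V) :
    h (x + -h b + v) - -h b = h (x + u) := by
  rw [← hv]
  simp only [LinearMap.sub_apply, Module.End.one_apply, map_add, map_sub, map_neg]
  abel

theorem affine_conj_translation_general (hd : Module.length R V ≤ d) (h : Module.End R V) (v : V)
    (g : V → V) (hg : ∀ x : V, g x = h (x + v)) :
    (∃ w u : V, u ∈ LinearMap.ker ((h - 1) ^ d) ∧ ∀ x : V, g (x + w) - w = h (x + u)) ∧
    (LinearMap.ker (h - 1) = ⊥ → ∃ w : V, ∀ x : V, g (x + w) - w = h x) := by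
  have hsup : LinearMap.ker ((h - 1) ^ d) ⊔ LinearMap.range (h - 1) = ⊤ :=
    ker_pow_sup_range_eq_top _ (range_pow_succ_eq_of_length_le hd _)
  obtain ⟨u, hu, _, ⟨b, rfl⟩, hv⟩ := Submodule.mem_sup.mp (hsup ▸ Submodule.mem_top (x := v))
  have hconj (x : V) : g (x + -h b) - -h b = h (x + u) := by
    rw [hg, translate_conj_of_eq_add h hv]
  refine ⟨⟨-h b, u, hu, hconj⟩, fun hbot ↦ ⟨-h b, fun x ↦ ?_⟩⟩
  have hinj : Function.Injective ⇑((h - 1) ^ d) := by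
    rw [Module.End.coe_pow]
    exact (LinearMap.ker_eq_bot.mp hbot).iterate d
  have hu_zero : u = 0 := (map_eq_zero_iff _ hinj).mp hu
  rw [hconj, hu_zero, add_zero]

end Module

/-- Let `U = ker ((h - 1) ^ d)` be the generalized `1`-eigenspace of `h`.
Then the affine transformation `g = t_v h` is conjugate by a translation `t_w` to `t_u h`
for some `u ∈ U`; in particular if `h` has no nonzero fixed vector then `g` is conjugate
by a translation to the permutation induced by `h`. -/
theorem affine_conj_translation (p d : ℕ) [Fact p.Prime] (V : Type*) [AddCommGroup V]
    [Module (ZMod p) V] [Module.Finite (ZMod p) V]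
    (hdim : Module.finrank (ZMod p) V = d)
    (h : V ≃ₗ[ZMod p] V) (v : V)
    (g : Equiv.Perm V) (hg : ∀ x : V, g x = h (x + v)) :
    (∃ (w u : V), u ∈ LinearMap.ker (((h.toLinearMap : Module.End (ZMod p) V) - 1) ^ d) ∧
      ∀ x : V, g (x + w) - w = h (x + u)) ∧
    (LinearMap.ker ((h.toLinearMap : Module.End (ZMod p) V) - 1) = ⊥ →
      ∃ w : V, ∀ x : V, g (x + w) - w = h x) := by
  have hlength : Module.length (ZMod p) V ≤ d := by rw [Module.length_eq_finrank, hdim]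
  exact affine_conj_translation_general hlength h.toLinearMap v g hg
end

section
/- Let p be a prime, V a d-dimensional vector space over 𝔽_p, h a linear automorphism of V, and v ∈ U where U = ker((h − 1)^d). Let W = range((h − 1)^d) and let W′ be an h-invariant subspace of W. Then the subgroup U + W′ of V is invariant under the affine transformation g = t_v h, and the number of orbits of the cyclic group ⟨g⟩ on U + W′ is at least t·r, where t is the number of orbits of ⟨g⟩ on U and r is the number of orbits of ⟨h⟩ on W′. -/
/-- The number of cycles (orbits of the generated cyclic group, fixed points counting as
cycles of length 1) of a permutation `g` on a subset `S`. -/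
noncomputable def cyclesOn {V : Type*} (g : Equiv.Perm V) (S : Set V) : ℕ :=
  Nat.card {O : Set V // ∃ x ∈ S, O = {y | g.SameCycle x y}}

/-!
The kernels of the powers of `h - 1` are stationary from the exponent `d` on, so `U` meets `W`, and
hence `W'`, trivially. Therefore every element of `U + W'` is `u + w` for a unique pair, and `g`
acts on it by `u + w ↦ g u + h w`. So addition is an injective equivariant map from `U × W'`, with
the action of `(g, h)`, to `U + W'`. Pairs in one cycle have both components in one cycle, hence
distinct pairs of cycles give distinct cycles of `g` on `U + W'`.
-/

open Function Set

section Cycles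

variable {α β γ δ : Type*} {a : Equiv.Perm α} {b : Equiv.Perm β} {c : Equiv.Perm γ}

/-- The cycle of the permutation `a` through `x`, as a set of points; thus the cycles of `a` that
meet `S` are the members of `cycleThrough a '' S`. -/
def cycleThrough (a : Equiv.Perm α) (x : α) : Set α :=
  {y | a.SameCycle x y}

theorem cycleThrough_eq_cycleThrough_iff {x y : α} :
    cycleThrough a x = cycleThrough a y ↔ a.SameCycle x y :=
  ⟨fun hxy => hxy.ge (Equiv.Perm.SameCycle.refl a y),
    fun hxy => Set.ext fun _ => ⟨hxy.symm.trans, hxy.trans⟩⟩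

theorem cyclesOn_eq_ncard_image_cycleThrough (a : Equiv.Perm α) (S : Set α) :
    cyclesOn a S = (cycleThrough a '' S).ncard := by
  simp only [image, eq_comm]
  rfl

theorem sameCycle_iff_exists_iterate {x y : α} :
    a.SameCycle x y ↔ ∃ n : ℕ, a^[n] x = y ∨ a^[n] y = x := by
  simp only [Equiv.Perm.iterate_eq_pow]
  constructor
  · rintro ⟨i, hi⟩
    obtain ⟨n, rfl | rfl⟩ := i.eq_nat_or_neg
    · exact ⟨n, .inl hi⟩
    · exact ⟨n, .inr (by simp [← hi])⟩
  · rintro ⟨n, hn | hn⟩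
    · exact ⟨n, hn⟩
    · exact Equiv.Perm.SameCycle.symm ⟨n, hn⟩

theorem sameCycle_map_of_semiconj {f : α → γ} (hf : Semiconj f a c) {x y : α}
    (hxy : a.SameCycle x y) : c.SameCycle (f x) (f y) := by
  obtain ⟨n, hn⟩ := sameCycle_iff_exists_iterate.1 hxy
  refine sameCycle_iff_exists_iterate.2 ⟨n, ?_⟩
  simp only [← (hf.iterate_right n).eq]
  exact hn.imp (congrArg f) (congrArg f)

theorem sameCycle_of_sameCycle_map {f : α → γ} {S : Set α} (hf : Semiconj f a c)
    (hinj : InjOn f S) (ha : MapsTo a S S) {x y : α} (hx : x ∈ S) (hy : y ∈ S)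
    (hxy : c.SameCycle (f x) (f y)) : a.SameCycle x y := by
  obtain ⟨n, hn⟩ := sameCycle_iff_exists_iterate.1 hxy
  simp only [← (hf.iterate_right n).eq] at hn
  exact sameCycle_iff_exists_iterate.2
    ⟨n, hn.imp (hinj (ha.iterate n hx) hy) (hinj (ha.iterate n hy) hx)⟩

theorem sameCycle_fst_and_snd_of_prodCongr {q q' : α × β}
    (hq : Equiv.Perm.SameCycle (a.prodCongr b) q q') :
    a.SameCycle q.1 q'.1 ∧ b.SameCycle q.2 q'.2 :=
  ⟨sameCycle_map_of_semiconj (f := Prod.fst) (fun _ => rfl) hq,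
    sameCycle_map_of_semiconj (f := Prod.snd) (fun _ => rfl) hq⟩

theorem encard_image_le_encard_image_of_mapsTo {φ : α → β} {ψ : γ → δ} {f : α → γ} {S : Set α}
    {T : Set γ} (hf : MapsTo f S T) (hψφ : ∀ x ∈ S, ∀ y ∈ S, ψ (f x) = ψ (f y) → φ x = φ y) :
    (φ '' S).encard ≤ (ψ '' T).encard := by
  obtain ⟨S', hS', hbij⟩ := exists_subset_bijOn S φ
  have hinj : InjOn (ψ ∘ f) S' := fun x hx y hy hxy =>
    hbij.injOn hx hy (hψφ x (hS' hx) y (hS' hy) hxy)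
  calc (φ '' S).encard = S'.encard := by rw [← hbij.image_eq, hbij.injOn.encard_image]
    _ = ((ψ ∘ f) '' S').encard := hinj.encard_image.symm
    _ ≤ (ψ '' T).encard := by
      rw [image_comp]
      exact encard_le_encard (image_mono (hf.mono_left hS').image_subset)

theorem encard_cycles_mul_encard_cycles_le {f : α × β → γ} {S : Set α} {T : Set β} {R : Set γ}
    (hf : Semiconj f (Prod.map a b) c) (hinj : InjOn f (S ×ˢ T)) (ha : MapsTo a S S)
    (hb : MapsTo b T T) (hR : MapsTo f (S ×ˢ T) R) :
    (cycleThrough a '' S).encard * (cycleThrough b '' T).encard ≤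
      (cycleThrough c '' R).encard := by
  rw [← encard_prod, ← prodMap_image_prod]
  refine encard_image_le_encard_image_of_mapsTo hR fun q hq q' hq' hqq' => ?_
  have hprod : Equiv.Perm.SameCycle (a.prodCongr b) q q' :=
    sameCycle_of_sameCycle_map hf hinj (ha.prodMap hb) hq hq'
      (cycleThrough_eq_cycleThrough_iff.1 hqq')
  obtain ⟨hfst, hsnd⟩ := sameCycle_fst_and_snd_of_prodCongr hprod
  exact Prod.ext (cycleThrough_eq_cycleThrough_iff.2 hfst)
    (cycleThrough_eq_cycleThrough_iff.2 hsnd)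

end Cycles

section Affine

variable {R V : Type*} [Ring R] [AddCommGroup V] [Module R V]

theorem injOn_add_of_disjoint {U W : Submodule R V} (hUW : Disjoint U W) :
    InjOn (fun q : V × V => q.1 + q.2) ((U : Set V) ×ˢ (W : Set V)) := by
  rintro ⟨u, w⟩ ⟨hu, hw⟩ ⟨u', w'⟩ ⟨hu', hw'⟩ (hsum : u + w = u' + w')
  have hdiff : (u - u') + (w - w') = 0 := by rw [sub_add_sub_comm, hsum, sub_self]
  obtain ⟨hu_eq, hw_eq⟩ :=
    Submodule.disjoint_iff_add_eq_zero.1 hUW (U.sub_mem hu hu') (W.sub_mem hw hw') hdiff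
  exact Prod.ext (sub_eq_zero.1 hu_eq) (sub_eq_zero.1 hw_eq)

theorem affine_invariant_orbit_bound_general (h : V ≃ₗ[R] V) {U W : Submodule R V}
    (hU : MapsTo h U U) (hW : MapsTo h W W) (hUW : Disjoint U W) {v : V} (hv : v ∈ U)
    (g : Equiv.Perm V) (hg : ∀ x, g x = h (x + v)) :
    MapsTo g (U ⊔ W : Submodule R V) (U ⊔ W : Submodule R V) ∧
      (cycleThrough g '' (U : Set V)).encard * (cycleThrough h.toEquiv '' (W : Set V)).encard ≤
        (cycleThrough g '' ((U ⊔ W : Submodule R V) : Set V)).encard := by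
  have hgU : MapsTo g U U := fun u hu => hg u ▸ hU (U.add_mem hu hv)
  have hg_add (u w : V) : g (u + w) = g u + h w := by
    rw [hg, hg, add_right_comm, map_add]
  constructor
  · intro x hx
    obtain ⟨u, hu, w, hw, rfl⟩ := Submodule.mem_sup.1 hx
    exact hg_add u w ▸ Submodule.add_mem_sup (hgU hu) (hW hw)
  · exact encard_cycles_mul_encard_cycles_le (fun q => (hg_add q.1 q.2).symm ▸ rfl)
      (injOn_add_of_disjoint hUW) hgU hW fun q hq => Submodule.add_mem_sup hq.1 hq.2

end Affine

/-- With `U = ker ((h-1)^d)`, `W = range ((h-1)^d)`, `v ∈ U`, and `W'` an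
`h`-invariant subspace of `W`, the subspace `U + W'` is invariant under `g = t_v h`, and
the number of `⟨g⟩`-orbits on `U + W'` is at least `t * r` where `t` is the number of
`⟨g⟩`-orbits on `U` and `r` the number of `⟨h⟩`-orbits on `W'`. -/
theorem affine_invariant_orbit_bound (p d : ℕ) [Fact p.Prime] (V : Type*) [AddCommGroup V]
    [Module (ZMod p) V] [Module.Finite (ZMod p) V]
    (hdim : Module.finrank (ZMod p) V = d)
    (h : V ≃ₗ[ZMod p] V)
    (U W : Submodule (ZMod p) V)
    (hUdef : U = LinearMap.ker (((h.toLinearMap : Module.End (ZMod p) V) - 1) ^ d))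
    (hWdef : W = LinearMap.range (((h.toLinearMap : Module.End (ZMod p) V) - 1) ^ d))
    (v : V) (hv : v ∈ U)
    (W' : Submodule (ZMod p) V) (hW'le : W' ≤ W) (hW'inv : ∀ x ∈ W', h x ∈ W')
    (g : Equiv.Perm V) (hg : ∀ x : V, g x = h (x + v)) :
    (∀ x ∈ (U ⊔ W' : Submodule (ZMod p) V), g x ∈ (U ⊔ W' : Submodule (ZMod p) V)) ∧
    cyclesOn g (U : Set V) * cyclesOn h.toEquiv (W' : Set V) ≤
      cyclesOn g ((U ⊔ W' : Submodule (ZMod p) V) : Set V) := by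
  have : Finite V := Module.finite_of_finite (ZMod p)
  set f : Module.End (ZMod p) V := h.toLinearMap
  have hU_eq : U = f.genEigenspace 1 d := by
    rw [hUdef, Module.End.genEigenspace_nat, one_smul]
  have hW_eq : W = f.genEigenrange 1 d := by
    rw [hWdef, Module.End.genEigenrange_nat, one_smul]
  have hU_inv : MapsTo h U U :=
    hU_eq ▸ Module.End.mapsTo_genEigenspace_of_comm (Commute.refl f) 1 d
  have hUW : Disjoint U W := by
    rw [hU_eq, hW_eq, ← hdim]
    exact (f.generalized_eigenvec_disjoint_range_ker 1).symm
  obtain ⟨hg_inv, hle⟩ :=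
    affine_invariant_orbit_bound_general h hU_inv hW'inv (hUW.mono_right hW'le) hv g hg
  refine ⟨hg_inv, ?_⟩
  simp only [cyclesOn_eq_ncard_image_cycleThrough]
  simpa only [ncard, ENat.toNat_mul] using ENat.toNat_le_toNat hle (toFinite _).encard_lt_top.ne
end

section
/- Let p be a prime, V a d-dimensional vector space over 𝔽_p, h a linear automorphism of V, and v ∈ U where U = ker((h − 1)^d). Let W = range((h − 1)^d), suppose U ≠ V, and let W′ be a nonzero h-invariant subspace of W. Suppose the affine transformation g = t_v h has at most four cycles on V, that g has t cycles on U, and that h has r cycles on W′. Then t·r ≤ 4 with t ≥ 1 and r ≥ 2; moreover, if t ≥ 2 then t = r = 2, W′ = W, and the cyclic group ⟨h⟩ acts transitively on W ∖ {0}. -/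
/-!
Since `g` is affine with linear part `h`, `g ^ n (u + w) = g ^ n u + h ^ n w`. As `U` and `W` are
invariant, and disjoint by Fitting's lemma, the `g`-cycle of `u + w` determines both the `g`-cycle
of `u` and the `h`-cycle of `w`, so `g` has at least as many cycles on `V` as there are pairs of a
`g`-cycle on `U` and an `h`-cycle on `W`. Moreover `{0}` is always a cycle of `h`, so `h` has two
cycles on a nonzero `W` exactly when it permutes `W \ {0}` transitively, and then `W` has no proper
nonzero invariant subspace.
-/

section Cycles

open Equiv.Perm

variable {α : Type*} {f : Equiv.Perm α} {s t : Set α} {x y z : α}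

/-- The cycle of `f` through `x`, encoded as the set of its points; `cyclesOn f s` counts the
cycles through the points of `s`. -/
def cycleSet (f : Equiv.Perm α) (x : α) : Set α := {y | f.SameCycle x y}

theorem cycleSet_eq_cycleSet_iff : cycleSet f x = cycleSet f y ↔ f.SameCycle x y := by
  refine ⟨fun hxy ↦ ?_, fun hxy ↦ Set.ext fun z ↦ ⟨hxy.symm.trans, hxy.trans⟩⟩
  have hy : y ∈ cycleSet f y := SameCycle.refl f y
  rwa [← hxy] at hy

theorem cyclesOn_eq_ncard (f : Equiv.Perm α) (s : Set α) :
    cyclesOn f s = (cycleSet f '' s).ncard :=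
  Nat.card_congr (Equiv.subtypeEquivRight fun O ↦ by
    simp only [Set.mem_image, cycleSet, eq_comm])

theorem cyclesOn_pos (hfin : (cycleSet f '' s).Finite) (hs : s.Nonempty) : 0 < cyclesOn f s := by
  rw [cyclesOn_eq_ncard, Set.ncard_pos hfin]
  exact hs.image _

theorem cyclesOn_mono (hfin : (cycleSet f '' t).Finite) (hst : s ⊆ t) :
    cyclesOn f s ≤ cyclesOn f t := by
  simp only [cyclesOn_eq_ncard]
  exact Set.ncard_le_ncard (Set.image_mono hst) hfin

theorem cyclesOn_eq_cyclesOn_sdiff_singleton_add_one (hfin : (cycleSet f '' s).Finite)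
    (hx : x ∈ s) (hfx : f x = x) : cyclesOn f s = cyclesOn f (s \ {x}) + 1 := by
  have hnotMem : cycleSet f x ∉ cycleSet f '' (s \ {x}) := by
    rintro ⟨y, ⟨-, hyx⟩, hy⟩
    exact hyx ((cycleSet_eq_cycleSet_iff.1 hy).eq_of_right hfx)
  rw [cyclesOn_eq_ncard, cyclesOn_eq_ncard,
    ← Set.ncard_insert_of_notMem hnotMem (hfin.subset (Set.image_mono Set.sdiff_subset)),
    ← Set.image_insert_eq, Set.insert_sdiff_singleton, Set.insert_eq_of_mem hx]

theorem two_le_cyclesOn_of_nontrivial (hfin : (cycleSet f '' s).Finite) (hx : x ∈ s)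
    (hfx : f x = x) (hs : s.Nontrivial) : 2 ≤ cyclesOn f s := by
  rw [cyclesOn_eq_cyclesOn_sdiff_singleton_add_one hfin hx hfx]
  exact Nat.succ_le_succ <|
    cyclesOn_pos (hfin.subset (Set.image_mono Set.sdiff_subset)) (hs.exists_ne x)

theorem sameCycle_of_cyclesOn_le_one (hfin : (cycleSet f '' s).Finite) (hs : cyclesOn f s ≤ 1)
    (hx : x ∈ s) (hy : y ∈ s) : f.SameCycle x y := by
  rw [cyclesOn_eq_ncard] at hs
  exact cycleSet_eq_cycleSet_iff.1 <| (Set.ncard_le_one hfin).1 hs _ (Set.mem_image_of_mem _ hx) _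
    (Set.mem_image_of_mem _ hy)

theorem sameCycle_of_cyclesOn_le_two (hfin : (cycleSet f '' s).Finite) (hs : cyclesOn f s ≤ 2)
    (hx : x ∈ s) (hfx : f x = x) (hy : y ∈ s) (hz : z ∈ s) (hyx : y ≠ x) (hzx : z ≠ x) :
    f.SameCycle y z := by
  rw [cyclesOn_eq_cyclesOn_sdiff_singleton_add_one hfin hx hfx] at hs
  exact sameCycle_of_cyclesOn_le_one (hfin.subset (Set.image_mono Set.sdiff_subset))
    (Nat.le_of_succ_le_succ hs) ⟨hy, hyx⟩ ⟨hz, hzx⟩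

theorem eq_of_subset_of_forall_sameCycle (hst : s ⊆ t) (hf : Set.BijOn f s s)
    (hs : s.Nontrivial) (hx : x ∈ s)
    (ht : ∀ y z, y ∈ t → z ∈ t → y ≠ x → z ≠ x → f.SameCycle y z) : s = t := by
  obtain ⟨y, hy, hyx⟩ := hs.exists_ne x
  refine hst.antisymm fun z hz ↦ ?_
  obtain rfl | hzx := eq_or_ne z x
  · exact hx
  · obtain ⟨n, rfl⟩ := ht y z (hst hy) hz hyx hzx
    exact (hf.perm_zpow n).mapsTo hy

end Cycles

theorem exists_image_image_eq_image {α β γ : Type*} [Nonempty γ] {F : α → β} {G : α → γ}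
    {s : Set α} (hFG : ∀ x ∈ s, ∀ y ∈ s, F x = F y → G x = G y) :
    ∃ φ : β → γ, φ '' (F '' s) = G '' s := by
  have hfactors : (s.domRestrict G).FactorsThrough (s.domRestrict F) :=
    fun x y hxy ↦ hFG x x.2 y y.2 hxy
  obtain ⟨φ, hφ⟩ := (Function.factorsThrough_iff _).1 hfactors
  exact ⟨φ, by rw [← Set.range_domRestrict G, hφ, Set.range_comp, Set.range_domRestrict]⟩

section Sums

variable {V : Type*} [Add V] {g h : Equiv.Perm V} {A B : Set V}

theorem zpow_apply_add (hgh : ∀ a b, g (a + b) = g a + h b) (n : ℤ) (a b : V) :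
    (g ^ n) (a + b) = (g ^ n) a + (h ^ n) b := by
  induction n generalizing a b with
  | zero => rfl
  | succ n ih => simp only [zpow_add_one, Equiv.Perm.mul_apply, hgh, ih]
  | pred n ih =>
    have hinv : g⁻¹ (a + b) = g⁻¹ a + h⁻¹ b := by
      rw [Equiv.Perm.inv_eq_iff_eq, hgh]
      simp only [Equiv.Perm.inv_def, Equiv.apply_symm_apply]
    simp only [zpow_sub_one, Equiv.Perm.mul_apply, hinv, ih]

theorem sameCycle_and_sameCycle_of_sameCycle_add (hgh : ∀ a b, g (a + b) = g a + h b)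
    (hAB : (A ×ˢ B).InjOn fun p ↦ p.1 + p.2) (hA : Set.BijOn g A A) (hB : Set.BijOn h B B)
    {a a' b b' : V} (ha : a ∈ A) (ha' : a' ∈ A) (hb : b ∈ B) (hb' : b' ∈ B)
    (hcycle : g.SameCycle (a + b) (a' + b')) : g.SameCycle a a' ∧ h.SameCycle b b' := by
  obtain ⟨n, hn⟩ := hcycle
  rw [zpow_apply_add hgh] at hn
  have hpair : ((g ^ n) a, (h ^ n) b) = (a', b') :=
    hAB ⟨(hA.perm_zpow n).mapsTo ha, (hB.perm_zpow n).mapsTo hb⟩ ⟨ha', hb'⟩ hn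
  rw [Prod.mk.injEq] at hpair
  exact ⟨⟨n, hpair.1⟩, ⟨n, hpair.2⟩⟩

theorem exists_prod_image_cycleSet_subset (hgh : ∀ a b, g (a + b) = g a + h b)
    (hAB : (A ×ˢ B).InjOn fun p ↦ p.1 + p.2) (hA : Set.BijOn g A A) (hB : Set.BijOn h B B) :
    ∃ φ : Set V → Set V × Set V,
      (cycleSet g '' A) ×ˢ (cycleSet h '' B) ⊆ φ '' (cycleSet g '' Set.univ) := by
  obtain ⟨φ, hφ⟩ := exists_image_image_eq_image (s := A ×ˢ B)
    (F := fun p ↦ cycleSet g (p.1 + p.2)) (G := Prod.map (cycleSet g) (cycleSet h)) <| by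
      rintro ⟨a, b⟩ ⟨ha, hb⟩ ⟨a', b'⟩ ⟨ha', hb'⟩ hcycle
      obtain ⟨hcycle_a, hcycle_b⟩ := sameCycle_and_sameCycle_of_sameCycle_add hgh hAB hA hB
        ha ha' hb hb' (cycleSet_eq_cycleSet_iff.1 hcycle)
      exact Prod.ext (cycleSet_eq_cycleSet_iff.2 hcycle_a) (cycleSet_eq_cycleSet_iff.2 hcycle_b)
  refine ⟨φ, ?_⟩
  rw [← Set.prodMap_image_prod, ← hφ]
  refine Set.image_mono ?_
  rintro _ ⟨p, -, rfl⟩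
  exact Set.mem_image_of_mem _ (Set.mem_univ (p.1 + p.2))

theorem finite_prod_image_cycleSet (hgh : ∀ a b, g (a + b) = g a + h b)
    (hAB : (A ×ˢ B).InjOn fun p ↦ p.1 + p.2) (hA : Set.BijOn g A A) (hB : Set.BijOn h B B)
    (hfin : (cycleSet g '' Set.univ).Finite) :
    ((cycleSet g '' A) ×ˢ (cycleSet h '' B)).Finite := by
  obtain ⟨φ, hφ⟩ := exists_prod_image_cycleSet_subset hgh hAB hA hB
  exact (hfin.image φ).subset hφ

theorem cyclesOn_mul_cyclesOn_le (hgh : ∀ a b, g (a + b) = g a + h b)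
    (hAB : (A ×ˢ B).InjOn fun p ↦ p.1 + p.2) (hA : Set.BijOn g A A) (hB : Set.BijOn h B B)
    (hfin : (cycleSet g '' Set.univ).Finite) :
    cyclesOn g A * cyclesOn h B ≤ cyclesOn g Set.univ := by
  obtain ⟨φ, hφ⟩ := exists_prod_image_cycleSet_subset hgh hAB hA hB
  simp only [cyclesOn_eq_ncard]
  calc (cycleSet g '' A).ncard * (cycleSet h '' B).ncard
      = ((cycleSet g '' A) ×ˢ (cycleSet h '' B)).ncard := Set.ncard_prod.symm
    _ ≤ (φ '' (cycleSet g '' Set.univ)).ncard := Set.ncard_le_ncard hφ (hfin.image φ)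
    _ ≤ (cycleSet g '' Set.univ).ncard := Set.ncard_image_le hfin

end Sums

theorem injOn_add_of_disjoint_s6 {V : Type*} [AddGroup V] {A B : AddSubgroup V}
    (hAB : Disjoint A B) : ((A : Set V) ×ˢ (B : Set V)).InjOn fun p ↦ p.1 + p.2 := by
  rintro ⟨a, b⟩ ⟨ha, hb⟩ ⟨a', b'⟩ ⟨ha', hb'⟩ hadd
  have hpair := AddSubgroup.add_injective_of_disjoint hAB
    (a₁ := (⟨a, ha⟩, ⟨b, hb⟩)) (a₂ := (⟨a', ha'⟩, ⟨b', hb'⟩)) hadd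
  simpa only [Prod.mk.injEq, Subtype.mk.injEq] using hpair

theorem affine_four_cycles_claim1_general {R V : Type*} [Ring R] [AddCommGroup V] [Module R V]
    (h : V ≃ₗ[R] V) {U W W' : Submodule R V} (hUW : Disjoint U W) (hU : Set.BijOn h U U)
    (hW : Set.BijOn h W W) {v : V} (hv : v ∈ U) (hW'ne : W' ≠ ⊥) (hW'le : W' ≤ W)
    (hW' : Set.BijOn h W' W') {g : Equiv.Perm V} (hg : ∀ x, g x = h (x + v))
    (hfin : (cycleSet g '' Set.univ).Finite) (hfour : cyclesOn g Set.univ ≤ 4) :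
    cyclesOn g U * cyclesOn h.toEquiv (W' : Set V) ≤ 4 ∧ 1 ≤ cyclesOn g U ∧
    2 ≤ cyclesOn h.toEquiv (W' : Set V) ∧
    (2 ≤ cyclesOn g U → cyclesOn g U = 2 ∧ cyclesOn h.toEquiv (W' : Set V) = 2 ∧ W' = W ∧
      ∀ x y : V, x ∈ W → y ∈ W → x ≠ 0 → y ≠ 0 → ∃ n : ℤ, (h.toEquiv ^ n) x = y) := by
  have hgh (a b : V) : g (a + b) = g a + h.toEquiv b := by
    simp only [hg, add_right_comm a b v, map_add, LinearEquiv.coe_toEquiv]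
  have hgU : Set.BijOn g U U := by
    rw [show ⇑g = h ∘ Equiv.addRight v from funext hg]
    exact hU.comp (Equiv.bijOn _ fun x ↦ U.add_mem_iff_left hv)
  have hinj : ((U : Set V) ×ˢ (W : Set V)).InjOn fun p ↦ p.1 + p.2 :=
    injOn_add_of_disjoint_s6 (A := U.toAddSubgroup) (B := W.toAddSubgroup) <|
      AddSubgroup.disjoint_def.2 fun hxU hxW ↦ Submodule.disjoint_def.1 hUW _ hxU hxW
  have hfin_prod := finite_prod_image_cycleSet hgh hinj hgU hW hfin
  have hfin_U := hfin_prod.of_prod_left (W.nonempty.image _)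
  have hfin_W := hfin_prod.of_prod_right (U.nonempty.image _)
  have hmul := (cyclesOn_mul_cyclesOn_le hgh hinj hgU hW hfin).trans hfour
  have hr_le := cyclesOn_mono hfin_W hW'le
  have ht := cyclesOn_pos hfin_U U.nonempty
  have hW'nontrivial : (W' : Set V).Nontrivial :=
    Set.nontrivial_coe_sort.1 (W'.nontrivial_iff_ne_bot.2 hW'ne)
  have hr := two_le_cyclesOn_of_nontrivial (hfin_W.subset (Set.image_mono hW'le)) W'.zero_mem
    (map_zero h) hW'nontrivial
  refine ⟨(Nat.mul_le_mul_left _ hr_le).trans hmul, ht, hr, fun ht2 ↦ ?_⟩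
  have hW_le : cyclesOn h.toEquiv (W : Set V) ≤ 2 := by nlinarith
  have htrans (x y : V) (hx : x ∈ W) (hy : y ∈ W) :=
    sameCycle_of_cyclesOn_le_two hfin_W hW_le W.zero_mem (map_zero h) hx hy
  exact ⟨by nlinarith, by omega, SetLike.coe_injective <|
    eq_of_subset_of_forall_sameCycle hW'le hW' hW'nontrivial W'.zero_mem htrans, htrans⟩

section Fitting

open Module

theorem disjoint_ker_pow_finrank_range_pow_finrank {K V : Type*} [DivisionRing K]
    [AddCommGroup V] [Module K V] [FiniteDimensional K V] (f : End K V) :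
    Disjoint (LinearMap.ker (f ^ finrank K V)) (LinearMap.range (f ^ finrank K V)) := by
  rw [Submodule.disjoint_def]
  rintro _ hker ⟨y, rfl⟩
  rwa [LinearMap.mem_ker, ← End.mul_apply, ← pow_add, ← LinearMap.mem_ker,
    End.ker_pow_eq_ker_pow_finrank_of_le (Nat.le_add_left _ _)] at hker

variable {R M : Type*} [Semiring R] [AddCommMonoid M] [Module R M] {f g : End R M}

theorem mapsTo_ker_of_commute (hfg : Commute f g) :
    Set.MapsTo f (LinearMap.ker g) (LinearMap.ker g) := fun x hx ↦ by
  rw [SetLike.mem_coe, LinearMap.mem_ker] at hx ⊢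
  rw [← End.mul_apply, ← hfg.eq, End.mul_apply, hx, map_zero]

theorem mapsTo_range_of_commute (hfg : Commute f g) :
    Set.MapsTo f (LinearMap.range g) (LinearMap.range g) := by
  rintro _ ⟨x, rfl⟩
  exact ⟨f x, LinearMap.congr_fun hfg.symm.eq x⟩

end Fitting

/-- Claim 1: With `U = ker ((h-1)^d)`, `W = range ((h-1)^d)`, `v ∈ U`,
`U ≠ V`, and `W'` a nonzero `h`-invariant subspace of `W`: if `g = t_v h` has at most
four cycles on `V`, `t` cycles on `U`, and `h` has `r` cycles on `W'`, then `t * r ≤ 4`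
with `t ≥ 1`, `r ≥ 2`; and if `t ≥ 2` then `t = r = 2`, `W' = W` and `⟨h⟩` is transitive
on `W \ {0}`. -/
theorem affine_four_cycles_claim1 (p d : ℕ) [Fact p.Prime] (V : Type*) [AddCommGroup V]
    [Module (ZMod p) V] [Module.Finite (ZMod p) V]
    (hdim : Module.finrank (ZMod p) V = d)
    (h : V ≃ₗ[ZMod p] V)
    (U W : Submodule (ZMod p) V)
    (hUdef : U = LinearMap.ker (((h.toLinearMap : Module.End (ZMod p) V) - 1) ^ d))
    (hWdef : W = LinearMap.range (((h.toLinearMap : Module.End (ZMod p) V) - 1) ^ d))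
    (hUne : U ≠ ⊤)
    (v : V) (hv : v ∈ U)
    (W' : Submodule (ZMod p) V) (hW'ne : W' ≠ ⊥) (hW'le : W' ≤ W)
    (hW'inv : ∀ x ∈ W', h x ∈ W')
    (g : Equiv.Perm V) (hg : ∀ x : V, g x = h (x + v))
    (hfour : cyclesOn g (Set.univ : Set V) ≤ 4)
    (t r : ℕ) (ht : t = cyclesOn g (U : Set V)) (hr : r = cyclesOn h.toEquiv (W' : Set V)) :
    t * r ≤ 4 ∧ 1 ≤ t ∧ 2 ≤ r ∧
    (2 ≤ t → t = 2 ∧ r = 2 ∧ W' = W ∧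
      ∀ x y : V, x ∈ W → y ∈ W → x ≠ 0 → y ≠ 0 → ∃ n : ℤ, (h.toEquiv ^ n) x = y) := by
  subst hUdef hWdef hdim ht hr
  have : Finite V := Module.finite_of_finite (ZMod p)
  have hbij (X : Submodule (ZMod p) V) (hX : Set.MapsTo h X X) : Set.BijOn h X X :=
    ((X : Set V).toFinite.injOn_iff_bijOn_of_mapsTo hX).1 h.injective.injOn
  have hcomm : Commute (h.toLinearMap : Module.End (ZMod p) V)
      (((h.toLinearMap : Module.End (ZMod p) V) - 1) ^ Module.finrank (ZMod p) V) :=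
    ((Commute.refl _).sub_right (Commute.one_right _)).pow_right _
  exact affine_four_cycles_claim1_general h (disjoint_ker_pow_finrank_range_pow_finrank _)
    (hbij _ (mapsTo_ker_of_commute hcomm)) (hbij _ (mapsTo_range_of_commute hcomm)) hv hW'ne
    hW'le (hbij W' hW'inv) hg (Set.toFinite _) hfour
end

section
/- Let p be a prime, V a d-dimensional vector space over 𝔽_p, h a linear automorphism of V, v ∈ U where U = ker((h − 1)^d), and g = t_v h. Suppose W₁ and W₂ are nonzero simple 𝔽_p[h]-submodules of W = range((h − 1)^d) with W₁ ∩ W₂ = 0, and suppose g has at most four cycles on V. Then, writing a = dim U, a₁ = dim W₁, a₂ = dim W₂ with a₁ ≤ a₂: V = U ⊕ W₁ ⊕ W₂ (internal direct sum), p = 2, gcd(a₁, a₂) = 1, a ≤ 2 ≤ a₁ < a₂ (so d ≥ 5), the cyclic group ⟨h⟩ acts transitively on Wᵢ ∖ {0} for i = 1, 2, the minimal polynomial of the restriction of h to U is (X − 1)^a, and g has exactly four cycles on V. -/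
open Polynomial

/-- A nonzero `h`-invariant subspace that contains no proper nonzero `h`-invariant
subspace, i.e. a simple `𝔽_p⟨h⟩`-submodule. -/
def IsSimpleInvariant {p : ℕ} {V : Type*} [AddCommGroup V] [Module (ZMod p) V]
    (h : V ≃ₗ[ZMod p] V) (W : Submodule (ZMod p) V) : Prop :=
  W ≠ ⊥ ∧ (∀ x ∈ W, h x ∈ W) ∧
    ∀ W' : Submodule (ZMod p) V, W' ≤ W → (∀ x ∈ W', h x ∈ W') → W' = ⊥ ∨ W' = W

/-!
Let `q = |K|`, `a = dim U` and `aᵢ = dim Wᵢ`, let `h` be the linear part of `g`, and pick nonzero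
`xᵢ ∈ Wᵢ`. The points `0`, `x₁`, `x₂`, `x₁ + x₂` lie on different cycles of `g`, because `gⁿ` maps
`w₁ + w₂` to `gⁿ 0 + hⁿ w₁ + hⁿ w₂` with `gⁿ 0 ∈ U` and so preserves which of the two
`Wᵢ`-components vanish. Hence these four cycles exhaust `V`, which gives `V = U ⊕ W₁ ⊕ W₂`, and the
last of them says that a single exponent `n` can move `(0, x₁, x₂)` to any `(u, y₁, y₂)` with
`y₁, y₂ ≠ 0`.

In particular `h` permutes `W₁ ∖ {0}` and `W₂ ∖ {0}` in single cycles whose lengths `q^a₁ - 1` and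
`q^a₂ - 1` are coprime; as both are divisible by `q^gcd(a₁, a₂) - 1`, this forces `q = 2` and
`gcd(a₁, a₂) = 1`. Moreover `g` permutes `U` in a single cycle of length `q^a`. In characteristic
`p` one has `∑_{i < p^k} hⁱ = (h - 1)^(p^k - 1)`, so if `(h - 1)^m = 0` on `U` with `m < p^k`, then
`g^(p^k)` fixes `0` and therefore `a ≤ k`. Taking `k = m` shows that the minimal polynomial of `h`
on `U` is `(X - 1)^a`, and taking `m = a`, `k = a - 1` rules out `a ≥ 3`.
-/

section Cycles

variable {α : Type*} {g : Equiv.Perm α} {x y : α}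

lemma sameCycle_of_iterate_eq {n : ℕ} (h : g^[n] x = y) : g.SameCycle x y :=
  ⟨n, by rwa [zpow_natCast, Equiv.Perm.coe_pow]⟩

lemma exists_iterate_eq_of_sameCycle [Finite α] (h : g.SameCycle x y) : ∃ n : ℕ, g^[n] x = y := by
  simpa only [Equiv.Perm.coe_pow] using h.exists_nat_pow_eq

lemma cyclesOn_univ (g : Equiv.Perm α) :
    cyclesOn g Set.univ = Nat.card (Quotient (Equiv.Perm.SameCycle.setoid g)) := by
  refine Nat.card_congr ((Equiv.subtypeEquivRight fun O => ?_).trans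
    (Setoid.quotientEquivClasses (Equiv.Perm.SameCycle.setoid g)).symm)
  have hclass (x : α) : {y | g.SameCycle x y} = {y | g.SameCycle y x} :=
    Set.ext fun _ => Equiv.Perm.sameCycle_comm
  simp only [Set.mem_univ, true_and, hclass]
  rfl

lemma cyclesOn_univ_eq_card_and_forall_sameCycle [Finite α] {ι : Type*} (P : ι → α)
    (hP : ∀ i j, g.SameCycle (P i) (P j) → i = j) (hle : cyclesOn g Set.univ ≤ Nat.card ι) :
    cyclesOn g Set.univ = Nat.card ι ∧ ∀ y, ∃ i, g.SameCycle (P i) y := by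
  rw [cyclesOn_univ] at hle ⊢
  let F : ι → Quotient (Equiv.Perm.SameCycle.setoid g) := fun i => Quotient.mk _ (P i)
  have hF : Function.Injective F := fun i j hij => hP i j (Quotient.exact hij)
  have hbij : Function.Bijective F := hF.bijective_of_nat_card_le hle
  refine ⟨(Nat.card_congr (Equiv.ofBijective F hbij)).symm, fun y => ?_⟩
  obtain ⟨i, hi⟩ := hbij.surjective (Quotient.mk _ y)
  exact ⟨i, Quotient.exact hi⟩

lemma minimalPeriod_eq_ncard_sameCycle (g : Equiv.Perm α) (x : α) :
    Function.minimalPeriod g x = {y | g.SameCycle x y}.ncard := by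
  have horbit : {y | g.SameCycle x y} = MulAction.orbit (Subgroup.zpowers g) x := by
    ext y
    simp [MulAction.mem_orbit_iff, Equiv.Perm.SameCycle, Subgroup.smul_def]
  rw [horbit, ← Nat.card_coe_set_eq, Nat.card_congr (MulAction.orbitZPowersEquiv g x),
    Nat.card_zmod]
  rfl

lemma coprime_minimalPeriod_of_iterate_eq {f : α → α} (hf : Function.Injective f) {n : ℕ}
    (hx : f^[n] x = x) (hy : f^[n] y = f y) :
    (Function.minimalPeriod f x).Coprime (Function.minimalPeriod f y) := by
  have hdvd : Function.minimalPeriod f x ∣ n := Function.IsPeriodicPt.minimalPeriod_dvd hx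
  cases n with
  | zero =>
    rw [Function.minimalPeriod_eq_one_iff_isFixedPt.2 hy.symm]
    exact Nat.coprime_one_right _
  | succ k =>
    rw [Function.iterate_succ_apply'] at hy
    have hdvd' : Function.minimalPeriod f y ∣ k :=
      Function.IsPeriodicPt.minimalPeriod_dvd (hf hy)
    exact Nat.Coprime.of_dvd hdvd hdvd' (by simp)

lemma card_le_of_isPeriodicPt {f : α → α} {m : ℕ} (hm : 0 < m)
    (hper : Function.IsPeriodicPt f m x) (hsurj : ∀ y, ∃ n : ℕ, f^[n] x = y) :
    Nat.card α ≤ m := by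
  have hF : Function.Surjective fun k : Fin m => f^[k] x := fun y => by
    obtain ⟨n, rfl⟩ := hsurj y
    exact ⟨⟨n % m, Nat.mod_lt n hm⟩, hper.iterate_mod_apply n⟩
  simpa only [Nat.card_fin] using Nat.card_le_card_of_surjective _ hF

end Cycles

lemma eq_two_and_coprime_of_coprime_pow_sub_one {q a b : ℕ} (hq : 2 ≤ q)
    (h : (q ^ a - 1).Coprime (q ^ b - 1)) : q = 2 ∧ a.Coprime b := by
  rw [Nat.Coprime, Nat.pow_sub_one_gcd_pow_sub_one] at h
  have hpow : q ^ a.gcd b = 2 := by omega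
  have hgcd : a.gcd b ≠ 0 := fun h0 => by simp [h0] at hpow
  have hq2 : q = 2 := le_antisymm (hpow ▸ Nat.le_self_pow hgcd q) hq
  subst hq2
  exact ⟨rfl, Nat.pow_right_injective le_rfl (hpow.trans (pow_one 2).symm)⟩

lemma lt_pow_pred {p a : ℕ} (hp : 2 ≤ p) (ha : 3 ≤ a) : a < p ^ (a - 1) := by
  obtain ⟨k, rfl⟩ := Nat.exists_eq_add_of_le' ha
  calc k + 3 < 4 * 2 ^ k := by
        have : k < 2 ^ k := Nat.lt_two_pow_self
        omega
    _ = 2 ^ (k + 2) := by ring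
    _ ≤ p ^ (k + 2) := Nat.pow_le_pow_left hp _

section Affine

variable {K V : Type*} [Ring K] [AddCommGroup V] [Module K V]

lemma iterate_add_eq_add_iterate_linear (g : V →ᵃ[K] V) (n : ℕ) (x w : V) :
    g^[n] (x + w) = g^[n] x + g.linear^[n] w := by
  induction n generalizing x w with
  | zero => rfl
  | succ n ih =>
    have hstep : g (x + w) = g x + g.linear w := by
      simpa only [vadd_eq_add, add_comm] using g.map_vadd x w
    simp only [Function.iterate_succ_apply, hstep, ih]

lemma iterate_zero_eq_sum_linear_pow (g : V →ᵃ[K] V) (n : ℕ) :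
    g^[n] 0 = (∑ i ∈ Finset.range n, g.linear ^ i) (g 0) := by
  induction n with
  | zero => rfl
  | succ n ih =>
    rw [Function.iterate_succ_apply, ← zero_add (g 0), iterate_add_eq_add_iterate_linear, ih,
      Finset.sum_range_succ, LinearMap.add_apply, Module.End.pow_apply, zero_add]

end Affine

section Unipotent

lemma geom_sum_char_pow {K R : Type*} [Field K] [Ring R] [Algebra K R] (p : ℕ) [Fact p.Prime]
    [CharP K p] (r : R) (k : ℕ) :
    ∑ i ∈ Finset.range (p ^ k), r ^ i = (r - 1) ^ (p ^ k - 1) := by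
  have hpos : 1 ≤ p ^ k := Nat.one_le_pow _ _ (Fact.out : p.Prime).pos
  have hX : ∑ i ∈ Finset.range (p ^ k), (X : K[X]) ^ i = (X - 1) ^ (p ^ k - 1) := by
    refine mul_right_cancel₀ (X_sub_C_ne_zero (1 : K)) ?_
    rw [C_1, geom_sum_mul, ← pow_succ, Nat.sub_add_cancel hpos, sub_pow_char_pow, one_pow]
  simpa using congrArg (aeval r) hX

variable {K U : Type*} [Field K] [AddCommGroup U] [Module K U] [Module.Finite K U]

lemma finrank_le_of_linear_sub_one_pow_eq_zero [Finite K] (p : ℕ) [Fact p.Prime] [CharP K p]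
    (g : U →ᵃ[K] U) (hg : ∀ u, ∃ n : ℕ, g^[n] 0 = u) {m k : ℕ} (hm : (g.linear - 1) ^ m = 0)
    (hmk : m < p ^ k) : Module.finrank K U ≤ k := by
  have hper : Function.IsPeriodicPt g (p ^ k) 0 := by
    rw [Function.IsPeriodicPt, Function.IsFixedPt, iterate_zero_eq_sum_linear_pow,
      geom_sum_char_pow (K := K) p, pow_eq_zero_of_le (Nat.le_sub_one_of_lt hmk) hm,
      LinearMap.zero_apply]
  have hcard : Nat.card K ^ Module.finrank K U ≤ p ^ k := by
    rw [← Module.natCard_eq_pow_finrank]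
    exact card_le_of_isPeriodicPt (by omega) hper hg
  have hp : p ≤ Nat.card K :=
    Nat.le_of_dvd Nat.card_pos ((CharP.cast_eq_zero_iff K p _).1 (by
      have := Fintype.ofFinite K
      rw [Nat.card_eq_fintype_card, FiniteField.cast_card_eq_zero]))
  exact (Nat.pow_le_pow_iff_right (Fact.out : p.Prime).one_lt).1
    ((Nat.pow_le_pow_left hp _).trans hcard)

lemma sub_one_pow_finrank_eq_zero {f : Module.End K U} (hf : IsNilpotent (f - 1)) :
    (f - 1) ^ Module.finrank K U = 0 := by
  obtain ⟨m, hm⟩ := hf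
  have hle := Module.End.ker_pow_le_ker_pow_finrank (f - 1) m
  rw [hm, LinearMap.ker_zero, top_le_iff] at hle
  exact LinearMap.ker_eq_top.1 hle

lemma minpoly_eq_X_sub_one_pow {f : Module.End K U} {a : ℕ} (ha : (f - 1) ^ a = 0)
    (hmin : ∀ m, (f - 1) ^ m = 0 → a ≤ m) : minpoly K f = (X - 1) ^ a := by
  have hprime : Prime (X - 1 : K[X]) := by simpa using prime_X_sub_C (1 : K)
  have hmonic : (X - 1 : K[X]).Monic := by simpa using monic_X_sub_C (1 : K)
  have hdvd : minpoly K f ∣ (X - 1) ^ a := minpoly.dvd K f (by simpa using ha)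
  obtain ⟨i, hi, hassoc⟩ := (dvd_prime_pow hprime a).1 hdvd
  have heq : minpoly K f = (X - 1) ^ i := eq_of_monic_of_associated
    (minpoly.monic (Algebra.IsIntegral.isIntegral f)) (hmonic.pow i) hassoc
  have hzero : (f - 1) ^ i = 0 := by simpa [heq] using minpoly.aeval K f
  rw [heq, le_antisymm hi (hmin i hzero)]

theorem finrank_le_two_and_minpoly_eq_of_forall_exists_iterate [Finite K] (g : U →ᵃ[K] U)
    (hnil : IsNilpotent (g.linear - 1)) (hg : ∀ u, ∃ n : ℕ, g^[n] 0 = u) :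
    Module.finrank K U ≤ 2 ∧ minpoly K g.linear = (X - 1) ^ Module.finrank K U := by
  obtain ⟨p, _⟩ := CharP.exists K
  have : Fact p.Prime := ⟨CharP.char_is_prime K p⟩
  have hp : 1 < p := (Fact.out : p.Prime).one_lt
  have hpow := sub_one_pow_finrank_eq_zero hnil
  have hmin : ∀ m, (g.linear - 1) ^ m = 0 → Module.finrank K U ≤ m := fun m hm =>
    finrank_le_of_linear_sub_one_pow_eq_zero p g hg hm (Nat.lt_pow_self hp)
  refine ⟨?_, minpoly_eq_X_sub_one_pow hpow hmin⟩
  by_contra! hlt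
  have := finrank_le_of_linear_sub_one_pow_eq_zero p g hg hpow (lt_pow_pred hp hlt)
  omega

end Unipotent

section Fitting

variable {K V : Type*} [Field K] [AddCommGroup V] [Module K V]

lemma disjoint_ker_pow_range_pow_finrank [Module.Finite K V] (f : Module.End K V) :
    Disjoint (LinearMap.ker (f ^ Module.finrank K V))
      (LinearMap.range (f ^ Module.finrank K V)) := by
  simpa [Module.End.genEigenspace_nat, Module.End.genEigenrange_nat] using
    (Module.End.generalized_eigenvec_disjoint_range_ker f 0).symm

lemma eq_zero_of_mem_range_of_apply_eq [Module.Finite K V] {f : Module.End K V} {x : V}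
    (hx : x ∈ LinearMap.range ((f - 1) ^ Module.finrank K V)) (hfix : f x = x) : x = 0 := by
  have hker : x ∈ LinearMap.ker ((f - 1) ^ Module.finrank K V) := by
    refine Module.End.ker_pow_le_ker_pow_finrank (f - 1) 1 ?_
    rw [pow_one, LinearMap.mem_ker, LinearMap.sub_apply, Module.End.one_apply, hfix, sub_self]
  exact Submodule.disjoint_def.1 (disjoint_ker_pow_range_pow_finrank (f - 1)) x hker hx

lemma isNilpotent_restrict_sub_one {f : Module.End K V} {U : Submodule K V} {k : ℕ}
    (hU : U ≤ LinearMap.ker ((f - 1) ^ k)) (hf : ∀ x ∈ U, f x ∈ U) :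
    IsNilpotent (f.restrict hf - 1) := by
  have hsub : ∀ x ∈ U, (f - 1) x ∈ U := fun x hx => U.sub_mem (hf x hx) hx
  have hrestrict : f.restrict hf - 1 = (f - 1).restrict hsub := rfl
  refine ⟨k, LinearMap.ext fun u => Subtype.ext ?_⟩
  rw [hrestrict, Module.End.pow_restrict]
  exact hU u.2

lemma ncard_diff_singleton_zero [Module.Finite K V] (W : Submodule K V) :
    ((W : Set V) \ {0}).ncard = Nat.card K ^ Module.finrank K W - 1 := by
  rw [Set.ncard_sdiff_singleton_of_mem W.zero_mem, ← Module.natCard_eq_pow_finrank]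
  rfl

lemma two_le_finrank_of_forall_apply_ne [Finite V] (hK : Nat.card K = 2) {h : V ≃ₗ[K] V}
    {W : Submodule K V} (hW : W ≠ ⊥) (hinv : ∀ x ∈ W, h x ∈ W) (hfix : ∀ x ∈ W, h x = x → x = 0) :
    2 ≤ Module.finrank K W := by
  obtain ⟨x, hx, hx0⟩ := W.exists_mem_ne_zero_of_ne_bot hW
  have hthree : 2 < (W : Set V).ncard := (Set.two_lt_ncard).2
    ⟨0, W.zero_mem, x, hx, h x, hinv x hx, hx0.symm, (h.map_ne_zero_iff.2 hx0).symm,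
      fun e => hx0 (hfix x hx e.symm)⟩
  have hcard : (W : Set V).ncard = 2 ^ Module.finrank K W :=
    (Module.natCard_eq_pow_finrank (K := K) (V := W)).trans (by rw [hK])
  rw [hcard] at hthree
  exact (Nat.pow_lt_pow_iff_right one_lt_two).1 (by simpa using hthree)

end Fitting

section Splitting

variable {K V : Type*} [Ring K] [AddCommGroup V] [Module K V] {U W₁ W₂ : Submodule K V}

lemma eq_and_eq_and_eq_of_add_add_eq (hU : Disjoint U (W₁ ⊔ W₂)) (hW : Disjoint W₁ W₂)
    {u u' w₁ w₁' w₂ w₂' : V} (hu : u ∈ U) (hu' : u' ∈ U) (hw₁ : w₁ ∈ W₁) (hw₁' : w₁' ∈ W₁)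
    (hw₂ : w₂ ∈ W₂) (hw₂' : w₂' ∈ W₂) (h : u + w₁ + w₂ = u' + w₁' + w₂') :
    u = u' ∧ w₁ = w₁' ∧ w₂ = w₂' := by
  have hinj {A B : Submodule K V} (hAB : Disjoint A B) {a a' b b' : V} (ha : a ∈ A) (ha' : a' ∈ A)
      (hb : b ∈ B) (hb' : b' ∈ B) (hab : a + b = a' + b') : a = a' ∧ b = b' := by
    have hadd : Disjoint A.toAddSubgroup B.toAddSubgroup := by
      rw [AddSubgroup.disjoint_def]
      exact fun hxA hxB => Submodule.disjoint_def.1 hAB _ hxA hxB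
    have := AddSubgroup.add_injective_of_disjoint hadd (a₁ := (⟨a, ha⟩, ⟨b, hb⟩))
      (a₂ := (⟨a', ha'⟩, ⟨b', hb'⟩)) hab
    simpa only [Prod.mk.injEq, Subtype.mk.injEq] using this
  obtain ⟨rfl, hw⟩ := hinj hU hu hu' (Submodule.add_mem_sup hw₁ hw₂)
    (Submodule.add_mem_sup hw₁' hw₂') (by simpa only [add_assoc] using h)
  exact ⟨rfl, hinj hW hw₁ hw₁' hw₂ hw₂' hw⟩

lemma iterate_mem_of_forall_mem {f : V → V} {W : Submodule K V} (hf : ∀ x ∈ W, f x ∈ W) (n : ℕ)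
    {x : V} (hx : x ∈ W) : f^[n] x ∈ W :=
  Set.MapsTo.iterate (s := (W : Set V)) hf n hx

lemma mem_of_mem_pair_zero {W : Submodule K V} {x w : V} (hx : x ∈ (W : Set V) \ {0})
    (hw : w ∈ ({0, x} : Set V)) : w ∈ W := by
  rcases hw with rfl | rfl
  exacts [W.zero_mem, hx.1]

lemma iterate_linearEquiv_eq_zero_iff (h : V ≃ₗ[K] V) (n : ℕ) {x : V} : h^[n] x = 0 ↔ x = 0 := by
  rw [← iterate_map_zero h n, (h.injective.iterate n).eq_iff, iterate_map_zero]

lemma iterate_add_eq_add_iterate_linear_add (g : V ≃ᵃ[K] V) (n : ℕ) (w₁ w₂ : V) :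
    g^[n] (w₁ + w₂) = g^[n] 0 + g.linear^[n] w₁ + g.linear^[n] w₂ := by
  have hadd (x w : V) : g^[n] (x + w) = g^[n] x + g.linear^[n] w :=
    iterate_add_eq_add_iterate_linear g.toAffineMap n x w
  rw [← hadd, ← hadd, zero_add]

/-- The affine permutation `g` preserves `U`, its linear part preserves `W₁` and `W₂`, and the
three submodules are independent. Their sum is not required to be all of `V`. -/
structure AffineSplitting (g : V ≃ᵃ[K] V) (U W₁ W₂ : Submodule K V) : Prop where
  apply_mem : ∀ x ∈ U, g x ∈ U
  linear_mem_left : ∀ x ∈ W₁, g.linear x ∈ W₁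
  linear_mem_right : ∀ x ∈ W₂, g.linear x ∈ W₂
  disjoint_sup : Disjoint U (W₁ ⊔ W₂)
  disjoint : Disjoint W₁ W₂

/-- A common power of `g` and of its linear part moves `(0, x₁, x₂)` to `(u, y₁, y₂)`, for all
`u ∈ U` and all nonzero `xᵢ, yᵢ ∈ Wᵢ`. This is what having at most four cycles amounts to. -/
def JointlyTransitive (g : V ≃ᵃ[K] V) (U W₁ W₂ : Submodule K V) : Prop :=
  ∀ ⦃u⦄, u ∈ U → ∀ ⦃x₁⦄, x₁ ∈ (W₁ : Set V) \ {0} → ∀ ⦃y₁⦄, y₁ ∈ (W₁ : Set V) \ {0} →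
    ∀ ⦃x₂⦄, x₂ ∈ (W₂ : Set V) \ {0} → ∀ ⦃y₂⦄, y₂ ∈ (W₂ : Set V) \ {0} →
      ∃ n : ℕ, g^[n] 0 = u ∧ g.linear^[n] x₁ = y₁ ∧ g.linear^[n] x₂ = y₂

namespace AffineSplitting

variable {g : V ≃ᵃ[K] V} {x₁ x₂ : V}

lemma iterate_zero_mem (hg : AffineSplitting g U W₁ W₂) (n : ℕ) : g^[n] 0 ∈ U :=
  iterate_mem_of_forall_mem hg.apply_mem n U.zero_mem

lemma iterate_components_eq (hg : AffineSplitting g U W₁ W₂) {n : ℕ} {u w₁ w₂ y₁ y₂ : V}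
    (hu : u ∈ U) (hw₁ : w₁ ∈ W₁) (hw₂ : w₂ ∈ W₂) (hy₁ : y₁ ∈ W₁) (hy₂ : y₂ ∈ W₂)
    (h : g^[n] (w₁ + w₂) = u + y₁ + y₂) :
    g^[n] 0 = u ∧ g.linear^[n] w₁ = y₁ ∧ g.linear^[n] w₂ = y₂ := by
  rw [iterate_add_eq_add_iterate_linear_add] at h
  exact eq_and_eq_and_eq_of_add_add_eq hg.disjoint_sup hg.disjoint (hg.iterate_zero_mem n) hu
    (iterate_mem_of_forall_mem hg.linear_mem_left n hw₁) hy₁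
    (iterate_mem_of_forall_mem hg.linear_mem_right n hw₂) hy₂ h

lemma eq_of_sameCycle_cond_add_cond [Finite V] (hg : AffineSplitting g U W₁ W₂)
    (hx₁ : x₁ ∈ (W₁ : Set V) \ {0}) (hx₂ : x₂ ∈ (W₂ : Set V) \ {0}) {b c : Bool × Bool}
    (h : Equiv.Perm.SameCycle g.toEquiv (cond b.1 x₁ 0 + cond b.2 x₂ 0)
      (cond c.1 x₁ 0 + cond c.2 x₂ 0)) : b = c := by
  have hmem {W : Submodule K V} {x : V} (hx : x ∈ (W : Set V) \ {0}) (b : Bool) :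
      cond b x 0 ∈ W := by
    cases b
    exacts [W.zero_mem, hx.1]
  have heq {x : V} (hx : x ≠ 0) {n : ℕ} {b c : Bool} (e : g.linear^[n] (cond b x 0) = cond c x 0) :
      b = c := by
    have hzero := iterate_linearEquiv_eq_zero_iff g.linear n (x := cond b x 0)
    rw [e] at hzero
    cases b <;> cases c <;> simp_all
  obtain ⟨n, hn⟩ := exists_iterate_eq_of_sameCycle h
  obtain ⟨-, h₁, h₂⟩ := hg.iterate_components_eq U.zero_mem (hmem hx₁ b.1) (hmem hx₂ b.2)
    (hmem hx₁ c.1) (hmem hx₂ c.2) (by rwa [zero_add])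
  exact Prod.ext (heq hx₁.2 h₁) (heq hx₂.2 h₂)

lemma cyclesOn_eq_four_and_forall_exists_iterate [Finite V] (hg : AffineSplitting g U W₁ W₂)
    (hx₁ : x₁ ∈ (W₁ : Set V) \ {0}) (hx₂ : x₂ ∈ (W₂ : Set V) \ {0})
    (hfour : cyclesOn g.toEquiv Set.univ ≤ 4) :
    cyclesOn g.toEquiv Set.univ = 4 ∧
      ∀ y, ∃ w₁ ∈ ({0, x₁} : Set V), ∃ w₂ ∈ ({0, x₂} : Set V), ∃ n : ℕ, g^[n] (w₁ + w₂) = y := by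
  have hcard : Nat.card (Bool × Bool) = 4 := by simp
  obtain ⟨hcount, hcover⟩ := cyclesOn_univ_eq_card_and_forall_sameCycle (g := g.toEquiv)
    (fun b : Bool × Bool => cond b.1 x₁ 0 + cond b.2 x₂ 0)
    (fun _ _ => hg.eq_of_sameCycle_cond_add_cond hx₁ hx₂) (hcard ▸ hfour)
  refine ⟨hcount.trans hcard, fun y => ?_⟩
  obtain ⟨b, hb⟩ := hcover y
  refine ⟨cond b.1 x₁ 0, ?_, cond b.2 x₂ 0, ?_, exists_iterate_eq_of_sameCycle hb⟩
  · cases b.1 <;> simp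
  · cases b.2 <;> simp

lemma cyclesOn_eq_four [Finite V] (hg : AffineSplitting g U W₁ W₂) (hW₁ : W₁ ≠ ⊥)
    (hW₂ : W₂ ≠ ⊥) (hfour : cyclesOn g.toEquiv Set.univ ≤ 4) :
    cyclesOn g.toEquiv Set.univ = 4 := by
  obtain ⟨x₁, hx₁⟩ := W₁.exists_mem_ne_zero_of_ne_bot hW₁
  obtain ⟨x₂, hx₂⟩ := W₂.exists_mem_ne_zero_of_ne_bot hW₂
  exact (hg.cyclesOn_eq_four_and_forall_exists_iterate hx₁ hx₂ hfour).1

lemma jointlyTransitive [Finite V] (hg : AffineSplitting g U W₁ W₂)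
    (hfour : cyclesOn g.toEquiv Set.univ ≤ 4) : JointlyTransitive g U W₁ W₂ := by
  intro u hu x₁ hx₁ y₁ hy₁ x₂ hx₂ y₂ hy₂
  have hne {x w y : V} {n : ℕ} (hw : w ∈ ({0, x} : Set V)) (e : g.linear^[n] w = y)
      (hy : y ≠ 0) : w = x :=
    hw.resolve_left fun h0 => hy (by rw [← e, h0, iterate_map_zero])
  obtain ⟨w₁, hw₁, w₂, hw₂, n, hn⟩ :=
    (hg.cyclesOn_eq_four_and_forall_exists_iterate hx₁ hx₂ hfour).2 (u + y₁ + y₂)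
  obtain ⟨h₀, h₁, h₂⟩ :=
    hg.iterate_components_eq hu (mem_of_mem_pair_zero hx₁ hw₁)
      (mem_of_mem_pair_zero hx₂ hw₂) hy₁.1 hy₂.1 hn
  obtain rfl := hne hw₁ h₁ hy₁.2
  obtain rfl := hne hw₂ h₂ hy₂.2
  exact ⟨n, h₀, h₁, h₂⟩

lemma independent (hg : AffineSplitting g U W₁ W₂) : iSupIndep ![U, W₁, W₂] := by
  have hleft : Disjoint (U ⊔ W₁) W₂ :=
    hg.disjoint.disjoint_sup_left_of_disjoint_sup_right hg.disjoint_sup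
  have hright : Disjoint (U ⊔ W₂) W₁ :=
    hg.disjoint.symm.disjoint_sup_left_of_disjoint_sup_right (by
      rw [sup_comm]; exact hg.disjoint_sup)
  rw [iSupIndep_fin_three]
  refine ⟨hg.disjoint_sup, ?_, hleft.symm⟩
  rw [sup_comm]
  exact hright.symm

lemma isInternal [Finite V] (hg : AffineSplitting g U W₁ W₂) (hW₁ : W₁ ≠ ⊥) (hW₂ : W₂ ≠ ⊥)
    (hfour : cyclesOn g.toEquiv Set.univ ≤ 4) : DirectSum.IsInternal ![U, W₁, W₂] := by
  obtain ⟨x₁, hx₁⟩ := W₁.exists_mem_ne_zero_of_ne_bot hW₁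
  obtain ⟨x₂, hx₂⟩ := W₂.exists_mem_ne_zero_of_ne_bot hW₂
  refine DirectSum.isInternal_submodule_of_iSupIndep_of_iSup_eq_top hg.independent
    (eq_top_iff.2 fun y _ => ?_)
  obtain ⟨w₁, hw₁, w₂, hw₂, n, rfl⟩ :=
    (hg.cyclesOn_eq_four_and_forall_exists_iterate hx₁ hx₂ hfour).2 y
  rw [iterate_add_eq_add_iterate_linear_add]
  refine add_mem (add_mem ?_ ?_) ?_
  · exact le_iSup ![U, W₁, W₂] 0 (hg.iterate_zero_mem n)
  · exact le_iSup ![U, W₁, W₂] 1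
      (iterate_mem_of_forall_mem hg.linear_mem_left n (mem_of_mem_pair_zero hx₁ hw₁))
  · exact le_iSup ![U, W₁, W₂] 2
      (iterate_mem_of_forall_mem hg.linear_mem_right n (mem_of_mem_pair_zero hx₂ hw₂))

end AffineSplitting

namespace JointlyTransitive

variable {g : V ≃ᵃ[K] V}

lemma swap (hg : JointlyTransitive g U W₁ W₂) : JointlyTransitive g U W₂ W₁ := by
  intro u hu x₁ hx₁ y₁ hy₁ x₂ hx₂ y₂ hy₂
  obtain ⟨n, h₀, h₁, h₂⟩ := hg hu hx₂ hy₂ hx₁ hy₁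
  exact ⟨n, h₀, h₂, h₁⟩

lemma exists_iterate_zero_eq (hg : JointlyTransitive g U W₁ W₂) (hW₁ : W₁ ≠ ⊥) (hW₂ : W₂ ≠ ⊥)
    {u : V} (hu : u ∈ U) : ∃ n : ℕ, g^[n] 0 = u := by
  obtain ⟨x₁, hx₁⟩ := W₁.exists_mem_ne_zero_of_ne_bot hW₁
  obtain ⟨x₂, hx₂⟩ := W₂.exists_mem_ne_zero_of_ne_bot hW₂
  obtain ⟨n, hn, -⟩ := hg hu hx₁ hx₁ hx₂ hx₂
  exact ⟨n, hn⟩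

lemma sameCycle_linear (hg : JointlyTransitive g U W₁ W₂) (hW₂ : W₂ ≠ ⊥) {x y : V}
    (hx : x ∈ (W₁ : Set V) \ {0}) (hy : y ∈ (W₁ : Set V) \ {0}) :
    Equiv.Perm.SameCycle g.linear.toEquiv x y := by
  obtain ⟨x₂, hx₂⟩ := W₂.exists_mem_ne_zero_of_ne_bot hW₂
  obtain ⟨n, -, hn, -⟩ := hg U.zero_mem hx hy hx₂ hx₂
  exact sameCycle_of_iterate_eq hn

lemma minimalPeriod_linear [Finite V] (hg : JointlyTransitive g U W₁ W₂) (hW₂ : W₂ ≠ ⊥)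
    (hinv : ∀ x ∈ W₁, g.linear x ∈ W₁) {x : V} (hx : x ∈ (W₁ : Set V) \ {0}) :
    Function.minimalPeriod g.linear x = ((W₁ : Set V) \ {0}).ncard := by
  refine (minimalPeriod_eq_ncard_sameCycle g.linear.toEquiv x).trans (congrArg Set.ncard ?_)
  refine Set.Subset.antisymm (fun y hy => ?_) fun y => hg.sameCycle_linear hW₂ hx
  obtain ⟨n, rfl⟩ := exists_iterate_eq_of_sameCycle hy
  exact ⟨iterate_mem_of_forall_mem hinv n hx.1,
    (iterate_linearEquiv_eq_zero_iff g.linear n).not.2 hx.2⟩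

lemma coprime_ncard [Finite V] (hg : JointlyTransitive g U W₁ W₂) (hW₁ : W₁ ≠ ⊥) (hW₂ : W₂ ≠ ⊥)
    (hinv₁ : ∀ x ∈ W₁, g.linear x ∈ W₁) (hinv₂ : ∀ x ∈ W₂, g.linear x ∈ W₂) :
    ((W₁ : Set V) \ {0}).ncard.Coprime ((W₂ : Set V) \ {0}).ncard := by
  obtain ⟨x₁, hx₁⟩ := W₁.exists_mem_ne_zero_of_ne_bot hW₁
  obtain ⟨x₂, hx₂⟩ := W₂.exists_mem_ne_zero_of_ne_bot hW₂
  obtain ⟨n, -, hn₁, hn₂⟩ := hg U.zero_mem hx₁ hx₁ hx₂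
    ⟨hinv₂ x₂ hx₂.1, g.linear.map_ne_zero_iff.2 hx₂.2⟩
  rw [← hg.minimalPeriod_linear hW₂ hinv₁ hx₁, ← hg.swap.minimalPeriod_linear hW₁ hinv₂ hx₂]
  exact coprime_minimalPeriod_of_iterate_eq g.linear.injective hn₁ hn₂

end JointlyTransitive

end Splitting

section FiniteField

variable {K V : Type*} [Field K] [AddCommGroup V] [Module K V] {U W₁ W₂ : Submodule K V}

lemma AffineSplitting.of_le_ker_of_le_range [Module.Finite K V] {g : V ≃ᵃ[K] V}
    (hU : U ≤ LinearMap.ker ((g.linear.toLinearMap - 1) ^ Module.finrank K V))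
    (hUinv : ∀ x ∈ U, g.linear x ∈ U) (hzero : g 0 ∈ U)
    (hinv₁ : ∀ x ∈ W₁, g.linear x ∈ W₁) (hinv₂ : ∀ x ∈ W₂, g.linear x ∈ W₂)
    (hW₁ : W₁ ≤ LinearMap.range ((g.linear.toLinearMap - 1) ^ Module.finrank K V))
    (hW₂ : W₂ ≤ LinearMap.range ((g.linear.toLinearMap - 1) ^ Module.finrank K V))
    (hdisj : Disjoint W₁ W₂) : AffineSplitting g U W₁ W₂ where
  apply_mem x hx := by
    have happly : g x = g.linear x + g 0 := congrFun g.toAffineMap.decomp x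
    exact happly ▸ U.add_mem (hUinv x hx) hzero
  linear_mem_left := hinv₁
  linear_mem_right := hinv₂
  disjoint_sup := (disjoint_ker_pow_range_pow_finrank _).mono hU (sup_le hW₁ hW₂)
  disjoint := hdisj

lemma JointlyTransitive.natCard_eq_two_and_coprime_finrank [Finite K] [Module.Finite K V]
    {g : V ≃ᵃ[K] V} (hg : JointlyTransitive g U W₁ W₂) (hW₁ : W₁ ≠ ⊥) (hW₂ : W₂ ≠ ⊥)
    (hinv₁ : ∀ x ∈ W₁, g.linear x ∈ W₁) (hinv₂ : ∀ x ∈ W₂, g.linear x ∈ W₂) :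
    Nat.card K = 2 ∧ (Module.finrank K W₁).Coprime (Module.finrank K W₂) := by
  have : Finite V := Module.finite_of_finite K
  have hcoprime := hg.coprime_ncard hW₁ hW₂ hinv₁ hinv₂
  rw [ncard_diff_singleton_zero, ncard_diff_singleton_zero] at hcoprime
  exact eq_two_and_coprime_of_coprime_pow_sub_one Finite.one_lt_card hcoprime

lemma finrank_le_two_and_minpoly_restrict_eq [Finite K] [Module.Finite K U] (g : V →ᵃ[K] V)
    (hU : ∀ x ∈ U, g x ∈ U) (hUlin : ∀ x ∈ U, g.linear x ∈ U)
    (hnil : IsNilpotent (g.linear.restrict hUlin - 1))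
    (hg : ∀ u ∈ U, ∃ n : ℕ, g^[n] 0 = u) :
    Module.finrank K U ≤ 2 ∧
      minpoly K (g.linear.restrict hUlin) = (X - 1) ^ Module.finrank K U := by
  let gU : U →ᵃ[K] U :=
    { toFun := fun u => ⟨g u, hU u u.2⟩
      linear := g.linear.restrict hUlin
      map_vadd' := fun u w => Subtype.ext (g.map_vadd u w) }
  refine finrank_le_two_and_minpoly_eq_of_forall_exists_iterate gU hnil fun u => ?_
  obtain ⟨n, hn⟩ := hg u u.2
  have hcoe : Function.Semiconj Subtype.val gU g := fun _ => rfl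
  exact ⟨n, Subtype.ext ((hcoe.iterate_right n 0).trans hn)⟩

theorem affine_four_cycles_claim3_general [Finite K] [Module.Finite K V] (h : V ≃ₗ[K] V)
    (hU : U ≤ LinearMap.ker ((h.toLinearMap - 1) ^ Module.finrank K V))
    (hUinv : ∀ x ∈ U, h x ∈ U) {v : V} (hv : v ∈ U) (g : Equiv.Perm V)
    (hg : ∀ x, g x = h (x + v)) (hW₁ : W₁ ≠ ⊥) (hW₂ : W₂ ≠ ⊥)
    (hinv₁ : ∀ x ∈ W₁, h x ∈ W₁) (hinv₂ : ∀ x ∈ W₂, h x ∈ W₂)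
    (hW₁le : W₁ ≤ LinearMap.range ((h.toLinearMap - 1) ^ Module.finrank K V))
    (hW₂le : W₂ ≤ LinearMap.range ((h.toLinearMap - 1) ^ Module.finrank K V))
    (hW₁₂ : W₁ ⊓ W₂ = ⊥) (hle : Module.finrank K W₁ ≤ Module.finrank K W₂)
    (hfour : cyclesOn g Set.univ ≤ 4) :
    DirectSum.IsInternal ![U, W₁, W₂] ∧ Nat.card K = 2 ∧
      Nat.gcd (Module.finrank K W₁) (Module.finrank K W₂) = 1 ∧ Module.finrank K U ≤ 2 ∧
      2 ≤ Module.finrank K W₁ ∧ Module.finrank K W₁ < Module.finrank K W₂ ∧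
      5 ≤ Module.finrank K V ∧
      (∀ x y : V, x ∈ W₁ → y ∈ W₁ → x ≠ 0 → y ≠ 0 → ∃ n : ℤ, (h.toEquiv ^ n) x = y) ∧
      (∀ x y : V, x ∈ W₂ → y ∈ W₂ → x ≠ 0 → y ≠ 0 → ∃ n : ℤ, (h.toEquiv ^ n) x = y) ∧
      minpoly K (h.toLinearMap.restrict hUinv) = (X - 1) ^ Module.finrank K U ∧
      cyclesOn g Set.univ = 4 := by
  have : Finite V := Module.finite_of_finite K
  let G : V ≃ᵃ[K] V := (AffineEquiv.constVAdd K V v).trans h.toAffineEquiv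
  have hGapply (x : V) : G x = h (x + v) := by simp [G, add_comm]
  obtain rfl : g = G.toEquiv := Equiv.ext fun x => (hg x).trans (hGapply x).symm
  have hzero : G 0 ∈ U := by simpa only [hGapply, zero_add] using hUinv v hv
  have hsplit : AffineSplitting G U W₁ W₂ := .of_le_ker_of_le_range hU hUinv hzero hinv₁ hinv₂
    hW₁le hW₂le (disjoint_iff.2 hW₁₂)
  have htrans : JointlyTransitive G U W₁ W₂ := hsplit.jointlyTransitive hfour
  obtain ⟨hcard, hcoprime⟩ := htrans.natCard_eq_two_and_coprime_finrank hW₁ hW₂ hinv₁ hinv₂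
  obtain ⟨hUrank, hminpoly⟩ := finrank_le_two_and_minpoly_restrict_eq G.toAffineMap
    hsplit.apply_mem hUinv (isNilpotent_restrict_sub_one hU hUinv)
    fun _ => htrans.exists_iterate_zero_eq hW₁ hW₂
  have hrank₁ : 2 ≤ Module.finrank K W₁ := two_le_finrank_of_forall_apply_ne hcard hW₁ hinv₁
    fun x hx => eq_zero_of_mem_range_of_apply_eq (hW₁le hx)
  have hlt : Module.finrank K W₁ < Module.finrank K W₂ := hle.lt_of_ne fun heq => by
    rw [heq, Nat.coprime_self] at hcoprime
    omega
  have hsum := Submodule.finrank_add_finrank_le_of_disjoint hsplit.disjoint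
  exact ⟨hsplit.isInternal hW₁ hW₂ hfour, hcard, hcoprime, hUrank, hrank₁, hlt, by omega,
    fun x y hx hy hx0 hy0 => htrans.sameCycle_linear hW₂ ⟨hx, hx0⟩ ⟨hy, hy0⟩,
    fun x y hx hy hx0 hy0 => htrans.swap.sameCycle_linear hW₁ ⟨hx, hx0⟩ ⟨hy, hy0⟩,
    hminpoly, hsplit.cyclesOn_eq_four hW₁ hW₂ hfour⟩

end FiniteField

/-- Claim 3: Suppose `W₁, W₂` are nonzero simple `𝔽_p⟨h⟩`-submodules of
`W = range((h-1)^d)` with `W₁ ∩ W₂ = 0`, `v ∈ U = ker((h-1)^d)`, and `g = t_v h` has at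
most four cycles on `V`.  Then `V = U ⊕ W₁ ⊕ W₂`, `p = 2`, `gcd(a₁,a₂) = 1`,
`a ≤ 2 ≤ a₁ < a₂` (so `d ≥ 5`), `⟨h⟩` is transitive on each `Wᵢ \ {0}`, `h` acts on `U`
as the Jordan block `J_a`, and `g` has exactly four cycles. -/
theorem affine_four_cycles_claim3 (p d : ℕ) [Fact p.Prime] (V : Type*) [AddCommGroup V]
    [Module (ZMod p) V] [Module.Finite (ZMod p) V]
    (hdim : Module.finrank (ZMod p) V = d)
    (h : V ≃ₗ[ZMod p] V)
    (U W : Submodule (ZMod p) V)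
    (hUdef : U = LinearMap.ker (((h.toLinearMap : Module.End (ZMod p) V) - 1) ^ d))
    (hWdef : W = LinearMap.range (((h.toLinearMap : Module.End (ZMod p) V) - 1) ^ d))
    (hUinv : ∀ x ∈ U, h x ∈ U)
    (v : V) (hv : v ∈ U)
    (g : Equiv.Perm V) (hg : ∀ x : V, g x = h (x + v))
    (W₁ W₂ : Submodule (ZMod p) V)
    (hW₁ : IsSimpleInvariant h W₁) (hW₂ : IsSimpleInvariant h W₂)
    (hW₁le : W₁ ≤ W) (hW₂le : W₂ ≤ W) (hW₁₂ : W₁ ⊓ W₂ = ⊥)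
    (a a₁ a₂ : ℕ) (ha : a = Module.finrank (ZMod p) U)
    (ha₁ : a₁ = Module.finrank (ZMod p) W₁) (ha₂ : a₂ = Module.finrank (ZMod p) W₂)
    (hle : a₁ ≤ a₂)
    (hfour : cyclesOn g (Set.univ : Set V) ≤ 4) :
    DirectSum.IsInternal (![U, W₁, W₂] : Fin 3 → Submodule (ZMod p) V) ∧
    p = 2 ∧ Nat.gcd a₁ a₂ = 1 ∧ a ≤ 2 ∧ 2 ≤ a₁ ∧ a₁ < a₂ ∧ 5 ≤ d ∧
    (∀ x y : V, x ∈ W₁ → y ∈ W₁ → x ≠ 0 → y ≠ 0 → ∃ n : ℤ, (h.toEquiv ^ n) x = y) ∧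
    (∀ x y : V, x ∈ W₂ → y ∈ W₂ → x ≠ 0 → y ≠ 0 → ∃ n : ℤ, (h.toEquiv ^ n) x = y) ∧
    minpoly (ZMod p) (h.toLinearMap.restrict hUinv) = (X - 1 : Polynomial (ZMod p)) ^ a ∧
    cyclesOn g (Set.univ : Set V) = 4 := by
  subst hdim hWdef ha ha₁ ha₂
  simpa only [Nat.card_zmod] using affine_four_cycles_claim3_general h hUdef.le hUinv hv g hg
    hW₁.1 hW₂.1 hW₁.2.1 hW₂.2.1 hW₁le hW₂le hW₁₂ hle hfour
end

section
/- Let p ≥ 5 be a prime, V a d-dimensional vector space over 𝔽_p with d ≥ 1, and h a linear automorphism of V with 4 · orderOf h ≥ p^d. Then V is indecomposable as an 𝔽_p[h]-module: whenever V = V₁ ⊕ V₂ is an internal direct sum of h-invariant subspaces V₁ and V₂, one of V₁, V₂ is the zero subspace. -/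
/-!
Let `K` be a finite field with `q` elements and `f` an endomorphism of a nonzero `K`-space `W` of
dimension `n`. By Cayley–Hamilton the algebra `K[f]` has at most `q ^ n` elements, so its unit group
has fewer. If `f` is invertible, that group contains both `Kˣ` and `f`, whence
`lcm (q - 1) (orderOf f) < q ^ n`. When `h` preserves `V = V₁ ⊕ V₂` with both summands nonzero and
acts on them with orders `a` and `b`, the order of `h` is `lcm a b`. As the factor `q - 1` is common
to the bounds for `a` and `b`,
`(q - 1) * lcm a b ≤ lcm (q - 1) a * lcm (q - 1) b < q ^ dim V`.
-/

open Polynomial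
open Module (End finrank)

theorem mul_lcm_dvd_lcm_mul_lcm {α : Type*} [CommMonoidWithZero α] [GCDMonoid α] (m a b : α) :
    m * lcm a b ∣ lcm m a * lcm m b :=
  calc
    m * lcm a b ∣ gcd (lcm m a) (lcm m b) * lcm (lcm m a) (lcm m b) :=
      mul_dvd_mul (dvd_gcd (dvd_lcm_left m a) (dvd_lcm_left m b))
        (lcm_dvd_lcm (dvd_lcm_right m a) (dvd_lcm_right m b))
    _ ∣ lcm m a * lcm m b := (gcd_mul_lcm _ _).dvd

theorem mul_lcm_le_lcm_mul_lcm (m a b : ℕ) : m * lcm a b ≤ lcm m a * lcm m b := by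
  rcases eq_or_ne (m * lcm a b) 0 with hzero | hne
  · exact hzero.trans_le (Nat.zero_le _)
  · have hprod : lcm m a * lcm m b ≠ 0 := by
      simp only [ne_eq, mul_eq_zero, lcm_eq_zero_iff] at hne ⊢
      tauto
    exact Nat.le_of_dvd (Nat.pos_of_ne_zero hprod) (mul_lcm_dvd_lcm_mul_lcm m a b)

theorem finrank_adjoin_singleton_le_natDegree {R A : Type*} [CommRing R] [StrongRankCondition R]
    [Semiring A] [Algebra R A] {x : A} {P : R[X]} (hP : P.Monic) (hx : aeval x P = 0) :
    finrank R (Algebra.adjoin R {x}) ≤ P.natDegree := by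
  classical
  let powers : Finset A := (Finset.range P.natDegree).image (x ^ ·)
  calc
    finrank R (Algebra.adjoin R {x})
      = finrank R (Submodule.span R (powers : Set A)) := by
        rw [Submodule.span_range_natDegree_eq_adjoin hP hx, Subalgebra.finrank_toSubmodule]
    _ ≤ powers.card := finrank_span_finset_le_card powers
    _ ≤ P.natDegree := Finset.card_image_le.trans_eq (Finset.card_range _)

theorem finrank_adjoin_end_le {R M : Type*} [CommRing R] [Nontrivial R] [AddCommGroup M]
    [Module R M] [Module.Finite R M] [Module.Free R M] (f : End R M) :
    finrank R (Algebra.adjoin R {f}) ≤ finrank R M :=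
  f.charpoly_natDegree ▸
    finrank_adjoin_singleton_le_natDegree f.charpoly_monic f.aeval_self_charpoly

theorem restrict_pow_eq_one_iff {R M : Type*} [Semiring R] [AddCommMonoid M] [Module R M]
    {f : End R M} {N : Submodule R M} (hN : ∀ x ∈ N, f x ∈ N) {k : ℕ} :
    f.restrict hN ^ k = 1 ↔ Set.EqOn (f ^ k) (1 : End R M) N := by
  rw [End.pow_restrict, LinearMap.ext_iff]
  simp only [Subtype.forall, Subtype.ext_iff, LinearMap.coe_restrict_apply, End.one_apply,
    Set.EqOn, SetLike.mem_coe]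

theorem orderOf_eq_lcm_orderOf_restrict {R M : Type*} [Semiring R] [AddCommMonoid M] [Module R M]
    {f : End R M} {N₁ N₂ : Submodule R M} (h : Codisjoint N₁ N₂)
    (h₁ : ∀ x ∈ N₁, f x ∈ N₁) (h₂ : ∀ x ∈ N₂, f x ∈ N₂) :
    orderOf f = lcm (orderOf (f.restrict h₁)) (orderOf (f.restrict h₂)) := by
  refine Nat.dvd_right_iff_eq.mp fun k ↦ ?_
  simp only [lcm_dvd_iff, orderOf_dvd_iff_pow_eq_one, restrict_pow_eq_one_iff]
  exact ⟨fun hk ↦ hk ▸ ⟨Set.eqOn_refl _ _, Set.eqOn_refl _ _⟩,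
    fun hk ↦ LinearMap.ext_on_codisjoint h hk.1 hk.2⟩

theorem orderOf_toLinearMap {R M : Type*} [Semiring R] [AddCommMonoid M] [Module R M]
    (h : M ≃ₗ[R] M) : orderOf (h : End R M) = orderOf h :=
  orderOf_injective LinearEquiv.automorphismGroup.toLinearMapMonoidHom
    LinearEquiv.toLinearMap_injective h

section Field

variable {K : Type*} [Field K]

theorem lcm_orderOf_dvd_natCard_units {A : Type*} [Semiring A] [Nontrivial A] [Algebra K A]
    (u : Aˣ) : lcm (Nat.card K - 1) (orderOf u) ∣ Nat.card Aˣ := by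
  refine lcm_dvd ?_ (orderOf_dvd_natCard u)
  rw [← Nat.card_units]
  exact Subgroup.card_dvd_of_injective (Units.map (algebraMap K A : K →* A))
    (Units.map_injective (algebraMap K A).injective)

theorem lcm_orderOf_lt_natCard {A : Type*} [Semiring A] [Nontrivial A] [Finite A] [Algebra K A]
    (x : A) : lcm (Nat.card K - 1) (orderOf x) < Nat.card A := by
  by_cases hx : IsOfFinOrder x
  · obtain ⟨u, rfl⟩ := hx.isUnit
    rw [orderOf_units]
    exact (Nat.le_of_dvd Nat.card_pos (lcm_orderOf_dvd_natCard_units u)).trans_lt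
      (natCard_units_lt A)
  · rw [orderOf_eq_zero hx, lcm_zero_right]
    exact Nat.card_pos

variable [Finite K] {V : Type*} [AddCommGroup V] [Module K V] [Module.Finite K V]

theorem lcm_orderOf_lt_natCard_pow_finrank [Nontrivial V] (f : End K V) :
    lcm (Nat.card K - 1) (orderOf f) < Nat.card K ^ finrank K V := by
  let A := Algebra.adjoin K {f}
  let x : A := ⟨f, Algebra.self_mem_adjoin_singleton K f⟩
  have : Finite A := Module.finite_of_finite K
  calc
    lcm (Nat.card K - 1) (orderOf f)
      = lcm (Nat.card K - 1) (orderOf x) :=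
        congrArg (lcm _) (orderOf_submonoid (H := A.toSubmonoid) x)
    _ < Nat.card A := lcm_orderOf_lt_natCard x
    _ = Nat.card K ^ finrank K A := Module.natCard_eq_pow_finrank
    _ ≤ Nat.card K ^ finrank K V := Nat.pow_le_pow_right Nat.card_pos (finrank_adjoin_end_le f)

theorem natCard_sub_one_mul_orderOf_lt_of_isCompl {f : End K V} {V₁ V₂ : Submodule K V}
    (h : IsCompl V₁ V₂) (hV₁ : V₁ ≠ ⊥) (hV₂ : V₂ ≠ ⊥)
    (hf₁ : ∀ x ∈ V₁, f x ∈ V₁) (hf₂ : ∀ x ∈ V₂, f x ∈ V₂) :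
    (Nat.card K - 1) * orderOf f < Nat.card K ^ finrank K V := by
  have : Nontrivial V₁ := Submodule.nontrivial_iff_ne_bot.mpr hV₁
  have : Nontrivial V₂ := Submodule.nontrivial_iff_ne_bot.mpr hV₂
  let f₁ : End K V₁ := f.restrict hf₁
  let f₂ : End K V₂ := f.restrict hf₂
  calc
    (Nat.card K - 1) * orderOf f
      = (Nat.card K - 1) * lcm (orderOf f₁) (orderOf f₂) := by
        rw [orderOf_eq_lcm_orderOf_restrict h.codisjoint hf₁ hf₂]
    _ ≤ lcm (Nat.card K - 1) (orderOf f₁) * lcm (Nat.card K - 1) (orderOf f₂) :=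
        mul_lcm_le_lcm_mul_lcm _ _ _
    _ < Nat.card K ^ finrank K V₁ * Nat.card K ^ finrank K V₂ :=
        Nat.mul_lt_mul'' (lcm_orderOf_lt_natCard_pow_finrank f₁)
          (lcm_orderOf_lt_natCard_pow_finrank f₂)
    _ = Nat.card K ^ finrank K V := by
        rw [← pow_add, Submodule.finrank_add_eq_of_isCompl h]

theorem large_order_indecomposable_general (h : V ≃ₗ[K] V)
    (hord : Nat.card K ^ finrank K V ≤ (Nat.card K - 1) * orderOf h) (V₁ V₂ : Submodule K V)
    (hV₁ : ∀ x ∈ V₁, h x ∈ V₁) (hV₂ : ∀ x ∈ V₂, h x ∈ V₂) (hcompl : IsCompl V₁ V₂) :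
    V₁ = ⊥ ∨ V₂ = ⊥ := by
  by_contra! hne
  have hlt := natCard_sub_one_mul_orderOf_lt_of_isCompl (f := h) hcompl hne.1 hne.2 hV₁ hV₂
  rw [orderOf_toLinearMap] at hlt
  exact hlt.not_ge hord

end Field

/-- Let `p ≥ 5` be prime, `V` a `d`-dimensional `𝔽_p`-space with `d ≥ 1`,
and `h` a linear automorphism with `4 * orderOf h ≥ p ^ d`.  Then `V` is indecomposable
as an `𝔽_p⟨h⟩`-module: if `V = V₁ ⊕ V₂` with `V₁, V₂` `h`-invariant, then `V₁ = 0` or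
`V₂ = 0`. -/
theorem large_order_indecomposable (p d : ℕ) [Fact p.Prime] (hp5 : 5 ≤ p) (hd1 : 1 ≤ d)
    (V : Type*) [AddCommGroup V] [Module (ZMod p) V] [Module.Finite (ZMod p) V]
    (hdim : Module.finrank (ZMod p) V = d)
    (h : V ≃ₗ[ZMod p] V) (hord : p ^ d ≤ 4 * orderOf h)
    (V₁ V₂ : Submodule (ZMod p) V)
    (hV₁ : ∀ x ∈ V₁, h x ∈ V₁) (hV₂ : ∀ x ∈ V₂, h x ∈ V₂)
    (hcompl : IsCompl V₁ V₂) :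
    V₁ = ⊥ ∨ V₂ = ⊥ := by
  refine large_order_indecomposable_general h ?_ V₁ V₂ hV₁ hV₂ hcompl
  rw [Nat.card_zmod, hdim]
  exact hord.trans (Nat.mul_le_mul_right _ (Nat.le_sub_one_of_lt hp5))
end

section
/- Let p ≥ 5 be a prime, V a d-dimensional vector space over 𝔽_p with d ≥ 3, and h a linear automorphism of V with 4 · orderOf h ≥ p^d. Then V is a simple 𝔽_p[h]-module (h acts irreducibly), orderOf h divides p^d − 1, and 3 · orderOf h ≥ p^d − 1 (i.e. h is the i-th power of a Singer cycle for some i ∈ {1, 2, 3}). -/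
/-!
Let `q = |F|`. The order of `h` is the order of `X` in `F[X] / (m)`, where `m` is the minimal
polynomial of `h`; as this ring has `q ^ deg m` elements, a large order forces `deg m = dim V`.
If `m = f * g` with `f`, `g` coprime, then `q - 1` divides the orders of the unit groups of both
`F[X] / (f)` and `F[X] / (g)`, so the order of `X` is at most the product of these two orders
divided by `q - 1`. If `m = f ^ e` with `f` irreducible of degree `a` and `e ≥ 2`, the order of `X`
divides `(q ^ a - 1) * q ^ k` as soon as `e ≤ q ^ k`, and for `q ≥ 3` the exponent
`k = a * e - a - 1` is large enough unless `a * e = 2`. Hence `m` is irreducible of degree `dim V`: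
the action is irreducible and the order of `h` divides `|(F[X] / (m))ˣ|`.
-/

open AdjoinRoot Polynomial

section Order

theorem orderOf_dvd_natCard_units {M : Type*} [Monoid M] {x : M} (hx : orderOf x ≠ 0) :
    orderOf x ∣ Nat.card Mˣ := by
  rw [← (orderOf_ne_zero_iff.1 hx).val_unit, orderOf_units]
  exact orderOf_dvd_natCard _

theorem natCard_sub_one_dvd_natCard_units (F A : Type*) [Field F] [Ring A] [Nontrivial A]
    [Algebra F A] : Nat.card F - 1 ∣ Nat.card Aˣ := by
  rw [← Nat.card_units]
  exact Subgroup.card_dvd_of_injective (Units.map (algebraMap F A : F →* A))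
    (Units.map_injective (algebraMap F A).injective)

theorem natCard_sub_one_mul_lcm_orderOf_lt (F : Type*) {A B : Type*} [Field F]
    [Ring A] [Nontrivial A] [Finite A] [Algebra F A]
    [Ring B] [Nontrivial B] [Finite B] [Algebra F B] (x : A) (y : B) :
    (Nat.card F - 1) * (orderOf x).lcm (orderOf y) < Nat.card A * Nat.card B := by
  obtain hx | hx := eq_or_ne (orderOf x) 0
  · simp [hx, Nat.card_pos]
  obtain hy | hy := eq_or_ne (orderOf y) 0
  · simp [hy, Nat.card_pos]
  have le_gcd : Nat.card F - 1 ≤ (Nat.card Aˣ).gcd (Nat.card Bˣ) :=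
    Nat.le_of_dvd (Nat.gcd_pos_of_pos_left _ Nat.card_pos)
      (Nat.dvd_gcd (natCard_sub_one_dvd_natCard_units F A) (natCard_sub_one_dvd_natCard_units F B))
  have lcm_le : (orderOf x).lcm (orderOf y) ≤ (Nat.card Aˣ).lcm (Nat.card Bˣ) :=
    Nat.le_of_dvd (Nat.lcm_pos Nat.card_pos Nat.card_pos)
      (lcm_dvd_lcm (orderOf_dvd_natCard_units hx) (orderOf_dvd_natCard_units hy))
  calc (Nat.card F - 1) * (orderOf x).lcm (orderOf y)
      ≤ (Nat.card Aˣ).gcd (Nat.card Bˣ) * (Nat.card Aˣ).lcm (Nat.card Bˣ) :=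
        Nat.mul_le_mul le_gcd lcm_le
    _ = Nat.card Aˣ * Nat.card Bˣ := Nat.gcd_mul_lcm _ _
    _ < Nat.card A * Nat.card B := Nat.mul_lt_mul'' (natCard_units_lt A) (natCard_units_lt B)

theorem pow_natCard_pow_eq_one_of_sub_one_pow_eq_zero (F : Type*) {A : Type*} [Field F] [Finite F]
    [CommRing A] [Nontrivial A] [Algebra F A] {x : A} {e k : ℕ} (hx : (x - 1) ^ e = 0)
    (hek : e ≤ Nat.card F ^ k) : x ^ Nat.card F ^ k = 1 := by
  cases nonempty_fintype F
  obtain ⟨p, _, n, hp, hcard⟩ := FiniteField.card' F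
  have : Fact p.Prime := ⟨hp⟩
  have : CharP A p := charP_of_injective_algebraMap (algebraMap F A).injective p
  rw [Nat.card_eq_fintype_card, hcard, ← pow_mul] at hek ⊢
  rw [← sub_eq_zero, ← one_pow (p ^ (n * k)), ← sub_pow_char_pow]
  exact pow_eq_zero_of_le hek hx

theorem exists_le_pow_and_add_add_one_eq_mul {q a e : ℕ} (hq : 3 ≤ q) (ha : a ≠ 0) (he : 2 ≤ e)
    (hae : a * e ≠ 2) : ∃ k, e ≤ q ^ k ∧ a + k + 1 = a * e := by
  obtain ⟨n, rfl⟩ := Nat.exists_eq_add_of_le' he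
  obtain ⟨k, hk⟩ : ∃ k, a * (n + 1) = k + 1 :=
    Nat.exists_eq_succ_of_ne_zero (Nat.mul_ne_zero ha n.succ_ne_zero)
  have degree_eq : a + k + 1 = a * (n + 2) := by linarith
  have hnk : n ≤ k := by
    have : n + 1 ≤ a * (n + 1) := Nat.le_mul_of_pos_left _ (Nat.pos_of_ne_zero ha)
    omega
  have hk1 : 1 ≤ k := by
    by_contra hk0
    have : a = 1 := Nat.eq_one_of_mul_eq_one_right (n := n + 1) (by omega)
    omega
  refine ⟨k, ?_, degree_eq⟩
  calc n + 2 ≤ 1 + k * 2 := by omega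
    _ ≤ (1 + 2) ^ k := one_add_le_pow_of_two_add_nonneg (Nat.zero_le _) k
    _ ≤ q ^ k := Nat.pow_le_pow_left hq k

end Order

section Root

theorem root_pow_eq_one_iff {R : Type*} [CommRing R] {f : R[X]} {n : ℕ} :
    root f ^ n = 1 ↔ f ∣ X ^ n - 1 := by
  rw [← mk_eq_zero]
  simp [sub_eq_zero]

theorem orderOf_root_dvd_of_dvd {R : Type*} [CommRing R] {f g : R[X]} (hfg : f ∣ g) :
    orderOf (root f) ∣ orderOf (root g) := by
  rw [orderOf_dvd_iff_pow_eq_one, root_pow_eq_one_iff]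
  exact hfg.trans (root_pow_eq_one_iff.1 (pow_orderOf_eq_one _))

theorem orderOf_root_mul_dvd_lcm {R : Type*} [CommRing R] {f g : R[X]} (hfg : IsCoprime f g) :
    orderOf (root (f * g)) ∣ (orderOf (root f)).lcm (orderOf (root g)) := by
  rw [orderOf_dvd_iff_pow_eq_one, root_pow_eq_one_iff]
  exact hfg.mul_dvd
    (root_pow_eq_one_iff.1 (orderOf_dvd_iff_pow_eq_one.1 (Nat.dvd_lcm_left _ _)))
    (root_pow_eq_one_iff.1 (orderOf_dvd_iff_pow_eq_one.1 (Nat.dvd_lcm_right _ _)))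

theorem finite_adjoinRoot {R : Type*} [CommRing R] [Finite R] {f : R[X]} (hf : f.Monic) :
    Finite (AdjoinRoot f) :=
  have := hf.finite_adjoinRoot
  Module.finite_of_finite R

theorem nontrivial_adjoinRoot {R : Type*} [CommRing R] [IsDomain R] {f : R[X]} (hf : f.Monic)
    (hf1 : f ≠ 1) : Nontrivial (AdjoinRoot f) :=
  AdjoinRoot.nontrivial f fun h => hf1 (hf.degree_le_zero_iff_eq_one.1 h.le)

variable {F : Type*} [Field F]

theorem orderOf_root_minpoly {A : Type*} [Ring A] [Algebra F A] (x : A) :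
    orderOf (root (minpoly F x)) = orderOf x := by
  rw [orderOf_eq_orderOf_iff]
  intro n
  rw [root_pow_eq_one_iff, minpoly.dvd_iff]
  simp [sub_eq_zero]

theorem natCard_adjoinRoot {f : F[X]} (hf : f.Monic) :
    Nat.card (AdjoinRoot f) = Nat.card F ^ f.natDegree := by
  have := hf.finite_adjoinRoot
  rw [Module.natCard_eq_pow_finrank (K := F), (powerBasis' hf).finrank, powerBasis'_dim]

theorem exists_monic_irreducible_pow_mul_isCoprime {g : F[X]} (hg : g.Monic) (hg1 : g ≠ 1) :
    ∃ (f h : F[X]) (e : ℕ), f.Monic ∧ Irreducible f ∧ h.Monic ∧ e ≠ 0 ∧ IsCoprime (f ^ e) h ∧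
      g = f ^ e * h := by
  obtain ⟨f, hf, hirr, hfg⟩ :=
    exists_monic_irreducible_factor g fun hu => hg1 (hg.isUnit_iff.1 hu)
  obtain ⟨h, hgh, hfh⟩ :=
    (FiniteMultiplicity.of_not_isUnit hirr.not_isUnit hg.ne_zero).exists_eq_pow_mul_and_not_dvd
  refine ⟨f, h, multiplicity f g, hf, hirr, (hf.pow _).of_mul_monic_left (hgh ▸ hg), ?_,
    ((hirr.coprime_iff_not_dvd).2 hfh).pow_left, hgh⟩
  exact multiplicity_ne_zero.2 hfg

theorem orderOf_root_dvd_of_irreducible {f : F[X]} (hf : f.Monic) (hirr : Irreducible f)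
    (hord : orderOf (root f) ≠ 0) : orderOf (root f) ∣ Nat.card F ^ f.natDegree - 1 := by
  have : Fact (Irreducible f) := ⟨hirr⟩
  rw [← natCard_adjoinRoot hf, ← Nat.card_units]
  exact orderOf_dvd_natCard_units hord

variable [Finite F]

theorem orderOf_root_lt {f : F[X]} (hf : f.Monic) (hf1 : f ≠ 1) :
    orderOf (root f) < Nat.card F ^ f.natDegree := by
  have := finite_adjoinRoot hf
  have := nontrivial_adjoinRoot hf hf1
  rw [← natCard_adjoinRoot hf]
  obtain h0 | h0 := eq_or_ne (orderOf (root f)) 0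
  · exact h0 ▸ Nat.card_pos
  · exact (Nat.le_of_dvd Nat.card_pos (orderOf_dvd_natCard_units h0)).trans_lt (natCard_units_lt _)

theorem natCard_sub_one_mul_orderOf_root_mul_lt {f g : F[X]} (hf : f.Monic) (hf1 : f ≠ 1)
    (hg : g.Monic) (hg1 : g ≠ 1) (hfg : IsCoprime f g) :
    (Nat.card F - 1) * orderOf (root (f * g)) < Nat.card F ^ (f * g).natDegree := by
  have := finite_adjoinRoot hf
  have := finite_adjoinRoot hg
  have := nontrivial_adjoinRoot hf hf1
  have := nontrivial_adjoinRoot hg hg1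
  rw [hf.natDegree_mul hg, pow_add, ← natCard_adjoinRoot hf, ← natCard_adjoinRoot hg]
  obtain hlcm | hlcm := Nat.eq_zero_or_pos ((orderOf (root f)).lcm (orderOf (root g)))
  · have h0 : orderOf (root (f * g)) = 0 := by
      obtain h | h := Nat.lcm_eq_zero_iff.1 hlcm
      · exact Nat.eq_zero_of_zero_dvd (h ▸ orderOf_root_dvd_of_dvd (dvd_mul_right f g))
      · exact Nat.eq_zero_of_zero_dvd (h ▸ orderOf_root_dvd_of_dvd (dvd_mul_left g f))
    simp [h0, Nat.card_pos]
  · exact (Nat.mul_le_mul_left _ (Nat.le_of_dvd hlcm (orderOf_root_mul_dvd_lcm hfg))).trans_lt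
      (natCard_sub_one_mul_lcm_orderOf_lt F _ _)

theorem orderOf_root_pow_dvd {f : F[X]} (hf : f.Monic) (hirr : Irreducible f) {e k : ℕ}
    (he : e ≠ 0) (hek : e ≤ Nat.card F ^ k) (hord : orderOf (root (f ^ e)) ≠ 0) :
    orderOf (root (f ^ e)) ∣ (Nat.card F ^ f.natDegree - 1) * Nat.card F ^ k := by
  have hfe1 : f ^ e ≠ 1 := fun h1 => hirr.not_isUnit (IsUnit.of_pow_eq_one h1 he)
  have := nontrivial_adjoinRoot (hf.pow e) hfe1
  have order_root_dvd : orderOf (root f) ∣ Nat.card F ^ f.natDegree - 1 :=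
    orderOf_root_dvd_of_irreducible hf hirr
      (ne_zero_of_dvd_ne_zero hord (orderOf_root_dvd_of_dvd (dvd_pow_self f he)))
  rw [orderOf_dvd_iff_pow_eq_one, pow_mul]
  refine pow_natCard_pow_eq_one_of_sub_one_pow_eq_zero F (e := e) ?_ hek
  have dvd_pow_sub_one : f ∣ X ^ (Nat.card F ^ f.natDegree - 1) - 1 :=
    root_pow_eq_one_iff.1 (orderOf_dvd_iff_pow_eq_one.1 order_root_dvd)
  simpa using mk_eq_zero.2 (pow_dvd_pow_of_dvd dvd_pow_sub_one e)

theorem natCard_sub_one_mul_orderOf_root_pow_lt {f : F[X]} (hf : f.Monic) (hirr : Irreducible f)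
    {e : ℕ} (he : 2 ≤ e) (hdeg : (f ^ e).natDegree ≠ 2) :
    (Nat.card F - 1) * orderOf (root (f ^ e)) < Nat.card F ^ (f ^ e).natDegree := by
  have he0 : e ≠ 0 := by omega
  have hfe1 : f ^ e ≠ 1 := fun h1 => hirr.not_isUnit (IsUnit.of_pow_eq_one h1 he0)
  have hq : 1 < Nat.card F := Finite.one_lt_card
  obtain hq2 | hq3 : Nat.card F = 2 ∨ 3 ≤ Nat.card F := by omega
  · simpa [hq2] using orderOf_root_lt (hf.pow e) hfe1
  obtain hord | hord := eq_or_ne (orderOf (root (f ^ e))) 0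
  · simp [hord, Nat.card_pos]
  rw [hf.natDegree_pow, mul_comm e] at hdeg ⊢
  obtain ⟨k, hek, hk⟩ :=
    exists_le_pow_and_add_add_one_eq_mul hq3 hirr.natDegree_pos.ne' he hdeg
  have one_lt_pow : 1 < Nat.card F ^ f.natDegree := Nat.one_lt_pow hirr.natDegree_pos.ne' hq
  have order_le : orderOf (root (f ^ e)) ≤ (Nat.card F ^ f.natDegree - 1) * Nat.card F ^ k :=
    Nat.le_of_dvd (by have := Nat.sub_pos_of_lt one_lt_pow; positivity)
      (orderOf_root_pow_dvd hf hirr he0 hek hord)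
  calc (Nat.card F - 1) * orderOf (root (f ^ e))
      ≤ Nat.card F * ((Nat.card F ^ f.natDegree - 1) * Nat.card F ^ k) :=
        Nat.mul_le_mul (Nat.sub_le _ _) order_le
    _ < Nat.card F * (Nat.card F ^ f.natDegree * Nat.card F ^ k) := by
        gcongr
        omega
    _ = Nat.card F ^ (f.natDegree * e) := by rw [← hk]; ring

theorem irreducible_of_natCard_pow_le_mul_orderOf_root {g : F[X]} (hg : g.Monic) (hg1 : g ≠ 1)
    (hdeg : g.natDegree ≠ 2)
    (hord : Nat.card F ^ g.natDegree ≤ (Nat.card F - 1) * orderOf (root g)) :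
    Irreducible g := by
  obtain ⟨f, h, e, hf, hirr, hh, he, hcop, rfl⟩ := exists_monic_irreducible_pow_mul_isCoprime hg hg1
  obtain rfl | hh1 := eq_or_ne h 1
  · rw [mul_one] at hdeg hord ⊢
    obtain rfl | he2 : e = 1 ∨ 2 ≤ e := by omega
    · rwa [pow_one]
    · exact absurd hord (natCard_sub_one_mul_orderOf_root_pow_lt hf hirr he2 hdeg).not_ge
  · have hfe1 : f ^ e ≠ 1 := fun h1 => hirr.not_isUnit (IsUnit.of_pow_eq_one h1 he)
    exact absurd hord
      (natCard_sub_one_mul_orderOf_root_mul_lt (hf.pow e) hfe1 hh hh1 hcop).not_ge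

end Root

section Endomorphism

theorem coe_aeval_restrict_apply {R M : Type*} [CommRing R] [AddCommGroup M] [Module R M]
    (T : Module.End R M) {W : Submodule R M} (hW : ∀ x ∈ W, T x ∈ W) (f : R[X]) (x : W) :
    (aeval (T.restrict hW) f x : M) = aeval T f x := by
  induction f using Polynomial.induction_on' with
  | add f g hf hg => simp [hf, hg]
  | monomial n a => simp [aeval_monomial, Module.End.pow_restrict n hW, LinearMap.restrict_apply]

theorem natDegree_minpoly_le_finrank {R M : Type*} [CommRing R] [Nontrivial R] [AddCommGroup M]
    [Module R M] [Module.Free R M] [Module.Finite R M] (T : Module.End R M) :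
    (minpoly R T).natDegree ≤ Module.finrank R M := by
  rw [← T.charpoly_natDegree]
  exact natDegree_le_natDegree (minpoly.min R T T.charpoly_monic T.aeval_self_charpoly)

variable {F V : Type*} [Field F] [AddCommGroup V] [Module F V] [Module.Finite F V]

theorem eq_bot_or_eq_top_of_irreducible_minpoly {T : Module.End F V}
    (hirr : Irreducible (minpoly F T)) (hdeg : (minpoly F T).natDegree = Module.finrank F V)
    {W : Submodule F V} (hW : ∀ x ∈ W, T x ∈ W) : W = ⊥ ∨ W = ⊤ := by
  refine or_iff_not_imp_left.2 fun hbot => Submodule.eq_top_of_finrank_eq ?_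
  have : Nontrivial W := Submodule.nontrivial_iff_ne_bot.2 hbot
  have aeval_restrict : aeval (T.restrict hW) (minpoly F T) = 0 := by
    ext x
    simp [coe_aeval_restrict_apply]
  have minpoly_restrict : minpoly F T = minpoly F (T.restrict hW) :=
    minpoly.eq_of_irreducible_of_monic hirr aeval_restrict
      (minpoly.monic (Algebra.IsIntegral.isIntegral T))
  refine le_antisymm W.finrank_le ?_
  rw [← hdeg, minpoly_restrict]
  exact natDegree_minpoly_le_finrank _

variable [Finite F] [Nontrivial V]

theorem natDegree_minpoly_eq_finrank_of_natCard_pow_le {T : Module.End F V}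
    (hord : Nat.card F ^ Module.finrank F V ≤ (Nat.card F - 1) * orderOf T) :
    (minpoly F T).natDegree = Module.finrank F V := by
  have hq : 1 < Nat.card F := Finite.one_lt_card
  refine le_antisymm (natDegree_minpoly_le_finrank T) (Nat.lt_succ_iff.1 ?_)
  rw [← Nat.pow_lt_pow_iff_right hq]
  calc Nat.card F ^ Module.finrank F V
      ≤ (Nat.card F - 1) * orderOf T := hord
    _ ≤ Nat.card F * orderOf T := Nat.mul_le_mul_right _ (Nat.sub_le _ _)
    _ < Nat.card F * Nat.card F ^ (minpoly F T).natDegree := by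
        rw [← orderOf_root_minpoly (F := F) T]
        gcongr
        exact orderOf_root_lt (minpoly.monic (Algebra.IsIntegral.isIntegral T)) (minpoly.ne_one F T)
    _ = Nat.card F ^ ((minpoly F T).natDegree + 1) := (pow_succ' _ _).symm

theorem irreducible_minpoly_of_natCard_pow_le {T : Module.End F V} (hdim : Module.finrank F V ≠ 2)
    (hord : Nat.card F ^ Module.finrank F V ≤ (Nat.card F - 1) * orderOf T) :
    Irreducible (minpoly F T) := by
  rw [← natDegree_minpoly_eq_finrank_of_natCard_pow_le hord] at hdim
  apply irreducible_of_natCard_pow_le_mul_orderOf_root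
    (minpoly.monic (Algebra.IsIntegral.isIntegral T)) (minpoly.ne_one F T) hdim
  rwa [natDegree_minpoly_eq_finrank_of_natCard_pow_le hord, orderOf_root_minpoly]

theorem orderOf_dvd_natCard_pow_finrank_sub_one {T : Module.End F V}
    (hdim : Module.finrank F V ≠ 2)
    (hord : Nat.card F ^ Module.finrank F V ≤ (Nat.card F - 1) * orderOf T) :
    orderOf T ∣ Nat.card F ^ Module.finrank F V - 1 := by
  have order_ne_zero : orderOf T ≠ 0 :=
    right_ne_zero_of_mul ((pow_pos Nat.card_pos _).trans_le hord).ne'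
  rw [← natDegree_minpoly_eq_finrank_of_natCard_pow_le hord, ← orderOf_root_minpoly (F := F) T]
  exact orderOf_root_dvd_of_irreducible (minpoly.monic (Algebra.IsIntegral.isIntegral T))
    (irreducible_minpoly_of_natCard_pow_le hdim hord)
    ((orderOf_root_minpoly T).trans_ne order_ne_zero)

end Endomorphism

theorem large_order_singer_general {F V : Type*} [Field F] [Finite F] [AddCommGroup V] [Module F V]
    [Module.Finite F V] [Nontrivial V] (hdim : Module.finrank F V ≠ 2) (h : V ≃ₗ[F] V) {c : ℕ}
    (hc : c + 1 < Nat.card F) (hord : Nat.card F ^ Module.finrank F V ≤ (c + 1) * orderOf h) :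
    (∀ W : Submodule F V, (∀ x ∈ W, h x ∈ W) → W = ⊥ ∨ W = ⊤) ∧
    orderOf h ∣ Nat.card F ^ Module.finrank F V - 1 ∧
    Nat.card F ^ Module.finrank F V - 1 ≤ c * orderOf h := by
  let T : Module.End F V := h.toLinearMap
  have order_eq : orderOf T = orderOf h :=
    orderOf_injective LinearEquiv.automorphismGroup.toLinearMapMonoidHom
      LinearEquiv.toLinearMap_injective h
  have large : Nat.card F ^ Module.finrank F V ≤ (Nat.card F - 1) * orderOf T :=
    order_eq ▸ hord.trans (Nat.mul_le_mul_right _ (Nat.le_sub_one_of_lt hc))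
  have order_dvd : orderOf h ∣ Nat.card F ^ Module.finrank F V - 1 :=
    order_eq ▸ orderOf_dvd_natCard_pow_finrank_sub_one hdim large
  refine ⟨fun W hW => eq_bot_or_eq_top_of_irreducible_minpoly (T := T)
    (irreducible_minpoly_of_natCard_pow_le hdim large)
    (natDegree_minpoly_eq_finrank_of_natCard_pow_le large) hW, order_dvd, ?_⟩
  obtain ⟨i, index_eq⟩ := order_dvd
  have index_lt : i < c + 1 := by
    apply lt_of_mul_lt_mul_left' (a := orderOf h)
    rw [← index_eq, mul_comm]
    exact (Nat.sub_one_lt (pow_pos Nat.card_pos _).ne').trans_le hord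
  rw [index_eq, mul_comm]
  exact Nat.mul_le_mul_right _ (Nat.le_of_lt_succ index_lt)

/-- Let `p ≥ 5` be prime, `V` a `d`-dimensional `𝔽_p`-space with `d ≥ 3`,
and `h` a linear automorphism with `4 * orderOf h ≥ p ^ d`.  Then `V` is a simple
`𝔽_p⟨h⟩`-module, `orderOf h` divides `p ^ d - 1`, and `3 * orderOf h ≥ p ^ d - 1`
(`h` is the `i`-th power of a Singer cycle for some `i ∈ {1, 2, 3}`). -/
theorem large_order_singer (p d : ℕ) [Fact p.Prime] (hp5 : 5 ≤ p) (hd3 : 3 ≤ d)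
    (V : Type*) [AddCommGroup V] [Module (ZMod p) V] [Module.Finite (ZMod p) V]
    (hdim : Module.finrank (ZMod p) V = d)
    (h : V ≃ₗ[ZMod p] V) (hord : p ^ d ≤ 4 * orderOf h) :
    Nontrivial V ∧
    (∀ W : Submodule (ZMod p) V, (∀ x ∈ W, h x ∈ W) → W = ⊥ ∨ W = ⊤) ∧
    orderOf h ∣ p ^ d - 1 ∧
    p ^ d - 1 ≤ 3 * orderOf h := by
  subst hdim
  have : Nontrivial V := Module.nontrivial_of_finrank_pos (R := ZMod p) (by omega)
  have general := large_order_singer_general (F := ZMod p) (c := 3) (by omega) h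
  rw [Nat.card_zmod] at general
  exact ⟨this, general hp5 hord⟩
end
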